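/- arXiv:math/0701066 — 2 statements merged into one kernel-verified Lean document; each statement's English description precedes it below -/
import Mathlib

section
/- Forrester's conjecture holds for $n_1 = 2$: for nonnegative integers $a, b, k, n_0$ and $n = n_0 + 2$, the constant term $\mathrm{CT}_x \prod_{i,j=n_0+1,\,i\ne j}^{n}(1-x_i/x_j)\, H(x_0,\ldots,x_n;a,b,k)$ equals $M_{n_0}(a,b,k)\prod_{j=0}^{1}\frac{(j+1)((k+1)j+a+b+kn_0)!\,(kj+k+j+kn_0)!}{k!\,((k+1)j+a+kn_0)!\,((k+1)j+b+kn_0)!}$. -/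
open MvPolynomial Finset

/-- The Forrester constant term
`CT_x ∏_{n₀+1 ≤ i ≠ j ≤ n₀+n₁}(1-x_i/x_j) · H(x_0,…,x_n;a,b,k)`, where
`H(x_0,…,x_n;a,b,k) = ∏_{l=1}^n (1-x_l/x_0)^a (1-x_0/x_l)^b ∏_{1≤i≠j≤n}(1-x_i/x_j)^k`
and `n = n₀ + n₁`.  Clearing denominators, it is the coefficient of
`x_0^(n·a) ∏_{l≤n₀} x_l^(b+(n-1)k) ∏_{l>n₀} x_l^(b+(n-1)k+n₁-1)` in
`∏_{n₀<i≠j≤n}(x_j-x_i) · ∏_{l=1}^n (x_0-x_l)^a (x_l-x_0)^b · ∏_{1≤i≠j≤n}(x_j-x_i)^k`. -/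
noncomputable def forresterCT (n₀ n₁ a b k : ℕ) : ℚ :=
  MvPolynomial.coeff
    (Finsupp.equivFunOnFinite.symm
      (Fin.cons ((n₀ + n₁) * a)
        (fun l : Fin (n₀ + n₁) =>
          b + (n₀ + n₁ - 1) * k + (if n₀ ≤ (l : ℕ) then n₁ - 1 else 0))))
    ((∏ j ∈ Finset.univ.filter (fun l : Fin (n₀ + n₁) => n₀ ≤ (l : ℕ)),
        ∏ i ∈ (Finset.univ.filter (fun l : Fin (n₀ + n₁) => n₀ ≤ (l : ℕ))).erase j,
          (X j.succ - X i.succ : MvPolynomial (Fin (n₀ + n₁ + 1)) ℚ)) *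
      (∏ l : Fin (n₀ + n₁),
        (X (0 : Fin (n₀ + n₁ + 1)) - X l.succ : MvPolynomial (Fin (n₀ + n₁ + 1)) ℚ) ^ a *
          (X l.succ - X (0 : Fin (n₀ + n₁ + 1))) ^ b) *
      ∏ j : Fin (n₀ + n₁), ∏ i ∈ Finset.univ.erase j,
        (X j.succ - X i.succ : MvPolynomial (Fin (n₀ + n₁ + 1)) ℚ) ^ k)

/-- The right-hand side of Forrester's conjecture:
`M_{n₀}(a,b,k) ∏_{j=0}^{n₁-1} (j+1)((k+1)j+a+b+kn₀)!(kj+k+j+kn₀)! /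
  (k!((k+1)j+a+kn₀)!((k+1)j+b+kn₀)!)`. -/
noncomputable def forresterRHS (n₀ n₁ a b k : ℕ) : ℚ :=
  (∏ l ∈ Finset.range n₀,
      (((a + b + k * l).factorial * (k * (l + 1)).factorial : ℚ) /
        ((a + k * l).factorial * (b + k * l).factorial * k.factorial))) *
    ∏ j ∈ Finset.range n₁,
      (((j + 1) * ((k + 1) * j + a + b + k * n₀).factorial *
          (k * j + k + j + k * n₀).factorial : ℚ) /
        (k.factorial * ((k + 1) * j + a + k * n₀).factorial *
          ((k + 1) * j + b + k * n₀).factorial))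

noncomputable section
namespace Forr

lemma logder {ι R : Type*} [DecidableEq ι] [CommRing R] [Algebra ℚ R] (d : Derivation ℚ R R)
    (u : ι → R) (k : ℕ) (s : Finset ι) :
    ∃ h : ι → R, (∀ j ∈ s, u j * h j = k * d (u j) * ∏ l ∈ s, u l ^ k) ∧
      d (∏ l ∈ s, u l ^ k) = ∑ j ∈ s, h j := by
  induction s using Finset.induction_on with
  | empty => exact ⟨fun _ => 0, by simp, by simp⟩
  | insert a s ha ih =>
    obtain ⟨h, h1, h2⟩ := ih
    refine ⟨fun j => if j = a then (k : R) * u a ^ (k - 1) * d (u a) * ∏ l ∈ s, u l ^ k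
      else h j * u a ^ k, ?_, ?_⟩
    · intro j hj
      rw [Finset.prod_insert ha]
      by_cases hja : j = a
      · subst hja
        simp only [if_true]
        rcases k with _ | k
        · simp
        · simp only [Nat.add_sub_cancel]; ring
      · have := h1 j (Finset.mem_of_mem_insert_of_ne hj hja)
        simp only [hja, if_false]
        rw [← mul_assoc, this]; ring
    · rw [Finset.prod_insert ha, Finset.sum_insert ha, Derivation.leibniz, h2,
        Derivation.leibniz_pow]
      have : ∑ x ∈ s, (if x = a then (k : R) * u a ^ (k - 1) * d (u a) * ∏ l ∈ s, u l ^ k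
        else h x * u a ^ k) = ∑ x ∈ s, h x * u a ^ k := by
        apply Finset.sum_congr rfl
        intro x hx
        rw [if_neg]; rintro rfl; exact ha hx
      rw [this, ← Finset.sum_mul]
      simp only [if_true, smul_eq_mul, nsmul_eq_mul]
      ring

abbrev Pol (n : ℕ) := MvPolynomial (Fin (n + 1)) ℚ
abbrev x {n : ℕ} (i : Fin n) : Pol n := X i.succ
abbrev y {n : ℕ} : Pol n := X 0

def D (n k : ℕ) : Pol n := ∏ j : Fin n, ∏ i ∈ univ.erase j, (x j - x i) ^ k
def T (n m : ℕ) : Pol n := ∏ l : Fin n, (y - x l) ^ m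

/-- exponents -/
def ex {n : ℕ} (c : ℕ) (g : Fin n → ℕ) : Fin (n + 1) →₀ ℕ :=
  Finsupp.equivFunOnFinite.symm (Fin.cons c g)

lemma x_sub_ne {n : ℕ} {i j : Fin n} (h : i ≠ j) : (x i - x j : Pol n) ≠ 0 := by
  rw [sub_ne_zero]
  intro h'
  exact h (Fin.succ_injective _ (MvPolynomial.X_injective h'))

lemma pd_self {n : ℕ} (i : Fin n) : pderiv i.succ (x i : Pol n) = 1 := by simp [x]
lemma pd_ne {n : ℕ} {i j : Fin n} (h : j ≠ i) : pderiv i.succ (x j : Pol n) = 0 :=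
  pderiv_X_of_ne (by simpa using h)
lemma pd_y {n : ℕ} (i : Fin n) : pderiv i.succ (y : Pol n) = 0 :=
  pderiv_X_of_ne (Fin.succ_ne_zero i).symm

lemma D_der (n k : ℕ) (i : Fin n) :
    ∃ h : Fin n → Pol n, (∀ j ≠ i, (x i - x j) * h j = 2 * k * D n k) ∧
      pderiv i.succ (D n k) = ∑ j ∈ univ.erase i, h j := by
  have hD : D n k = ∏ p ∈ (univ : Finset (Fin n)).sigma (fun j => univ.erase j),
      (x p.1 - x p.2) ^ k := by
    rw [D, Finset.prod_sigma]
  obtain ⟨h, h1, h2⟩ := logder (pderiv i.succ) (fun p : (_ : Fin n) × Fin n => (x p.1 - x p.2 : Pol n)) k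
    ((univ : Finset (Fin n)).sigma (fun j => univ.erase j))
  rw [← hD] at h1 h2
  refine ⟨fun j => h ⟨i, j⟩ + h ⟨j, i⟩, ?_, ?_⟩
  · intro j hj
    have e1 := h1 ⟨i, j⟩ (by simp [hj])
    have e2 := h1 ⟨j, i⟩ (by simp [hj.symm])
    simp only [map_sub, pd_self, pd_ne hj] at e1 e2
    linear_combination e1 - e2
  · rw [h2, Finset.sum_sigma, ← Finset.add_sum_erase _ _ (mem_univ i), Finset.sum_add_distrib]
    congr 1
    apply Finset.sum_congr rfl
    intro j hj
    have hj' : j ≠ i := by simpa using hj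
    apply Finset.sum_eq_single_of_mem
    · simp [hj'.symm]
    · intro l hl hli
      have hl' : l ≠ j := by simpa using hl
      have e1 := h1 ⟨j, l⟩ (by simp [hl'])
      simp only [map_sub, pd_ne hli, pd_ne hj', sub_self, mul_zero, zero_mul] at e1
      exact (mul_eq_zero.mp e1).resolve_left (x_sub_ne hl'.symm)

lemma T_der (n m : ℕ) (i : Fin n) :
    (y - x i) * pderiv i.succ (T n m) = -(m : Pol n) * T n m := by
  rw [T, ← Finset.mul_prod_erase _ _ (mem_univ i), Derivation.leibniz]
  have : pderiv i.succ (∏ l ∈ univ.erase i, (y - x l : Pol n) ^ m) = 0 := by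
    obtain ⟨h, h1, h2⟩ := logder (pderiv i.succ) (fun l => (y - x l : Pol n)) m (univ.erase i)
    rw [h2]
    apply Finset.sum_eq_zero
    intro j hj
    have e := h1 j hj
    have hj' : j ≠ i := by simpa using hj
    simp only [map_sub, pd_ne hj', pd_y, sub_self, mul_zero, zero_mul] at e
    refine (mul_eq_zero.mp e).resolve_left ?_
    rw [sub_eq_zero]
    intro h'
    exact (Fin.succ_ne_zero j).symm (MvPolynomial.X_injective h')
  rw [this, Derivation.leibniz_pow]
  simp only [map_sub, pd_self, pd_y, smul_eq_mul, nsmul_eq_mul]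
  rcases m with _ | m
  · simp
  · simp only [Nat.add_sub_cancel]; push_cast; ring

/-- swap -/
def sw {n : ℕ} (i j : Fin n) : Pol n →ₐ[ℚ] Pol n := rename (Equiv.swap i.succ j.succ)

lemma sw_y {n : ℕ} (i j : Fin n) : sw i j (y : Pol n) = y := by
  simp only [sw, y, rename_X]
  rw [Equiv.swap_apply_of_ne_of_ne (Fin.succ_ne_zero i).symm (Fin.succ_ne_zero j).symm]

lemma sw_x {n : ℕ} (i j l : Fin n) : sw i j (x l : Pol n) = x (Equiv.swap i j l) := by
  simp only [sw, x, rename_X]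
  rw [← (Fin.succ_injective n).swap_apply]

lemma sw_T {n : ℕ} (m : ℕ) (i j : Fin n) : sw i j (T n m) = T n m := by
  simp only [T, map_prod, map_pow, map_sub, sw_x, sw_y]
  exact Equiv.prod_comp (Equiv.swap i j) (fun l => (y - x l : Pol n) ^ m)

lemma sw_D {n : ℕ} (k : ℕ) (i j : Fin n) : sw i j (D n k) = D n k := by
  simp only [D, map_prod, map_pow, map_sub, sw_x]
  rw [← Equiv.prod_comp (Equiv.swap i j) (fun l => ∏ r ∈ univ.erase l, (x l - x r : Pol n) ^ k)]
  apply Finset.prod_congr rfl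
  intro l _
  apply Finset.prod_bij (fun r _ => Equiv.swap i j r)
  · intro a ha; simpa using ha
  · intro a _ b _ h; simpa using h
  · intro b hb
    refine ⟨Equiv.swap i j b, ?_, by simp⟩
    simp only [mem_erase, mem_univ, and_true] at hb ⊢
    intro h; apply hb; rw [← h]; simp
  · intro a _; rfl

lemma coeff_sw {n : ℕ} (c : ℕ) (g : Fin n → ℕ) (i j : Fin n) (h : g i = g j) (p : Pol n) :
    coeff (ex c g) (sw i j p) = coeff (ex c g) p := by
  have hm : (ex c g).mapDomain (Equiv.swap i.succ j.succ) = ex c g := by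
    ext t
    have := Finsupp.mapDomain_apply (Equiv.swap i.succ j.succ).injective (ex c g)
      (Equiv.swap i.succ j.succ t)
    rw [Equiv.swap_apply_self] at this
    rw [this]
    refine Fin.cases ?_ (fun l => ?_) t
    · rw [Equiv.swap_apply_of_ne_of_ne (Fin.succ_ne_zero i).symm (Fin.succ_ne_zero j).symm]
    · rw [(Fin.succ_injective n).swap_apply]
      simp only [ex, Finsupp.equivFunOnFinite_symm_apply_apply, Fin.cons_succ]
      rw [Equiv.swap_apply_def]; split_ifs <;> simp_all
  conv_lhs => rw [← hm]
  exact coeff_rename_mapDomain _ (Equiv.injective _) _ _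

lemma coeff_euler {n : ℕ} (e : Fin (n + 1) →₀ ℕ) (i : Fin (n + 1)) (p : Pol n) :
    coeff e (X i * pderiv i p) = e i * coeff e p := by
  induction p using MvPolynomial.induction_on' with
  | monomial u a =>
    rw [X_mul_pderiv_monomial, coeff_smul, coeff_monomial]
    split_ifs with h
    · subst h; simp
    · simp
  | add p q hp hq => simp only [map_add, mul_add, coeff_add, hp, hq]

lemma ex_succ {n : ℕ} (c : ℕ) (g : Fin n → ℕ) (i : Fin n) : ex c g i.succ = g i := by
  simp [ex]

/-- moment functional -/
def L (n m k c s : ℕ) (p : Pol n) : ℚ := coeff (ex c (fun _ => s)) (p * (T n m * D n k))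

lemma L_add {n m k c s : ℕ} (p q : Pol n) : L n m k c s (p + q) = L n m k c s p + L n m k c s q := by
  simp [L, add_mul]
lemma L_sub {n m k c s : ℕ} (p q : Pol n) : L n m k c s (p - q) = L n m k c s p - L n m k c s q := by
  simp [L, sub_mul]
lemma L_neg {n m k c s : ℕ} (p : Pol n) : L n m k c s (-p) = - L n m k c s p := by
  simp [L]

lemma L_sw {n m k c s : ℕ} (i j : Fin n) (p : Pol n) : L n m k c s (sw i j p) = L n m k c s p := by
  rw [L, L, ← coeff_sw c (fun _ => s) i j rfl (p * _)]
  rw [map_mul, map_mul, sw_T, sw_D]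

lemma key {n m k c s : ℕ} (i : Fin n) (P : Pol n) (Q : Fin n → Pol n)
    (hQ : ∀ j ≠ i, (y - x i) * x i * P - sw i j ((y - x i) * x i * P) = (x i - x j) * Q j) :
    (s : ℚ) * L n m k c s ((y - x i) * P) =
      L n m k c s (x i * pderiv i.succ ((y - x i) * P)) - m * L n m k c s (x i * P)
        + k * ∑ j ∈ univ.erase i, L n m k c s (Q j) := by
  obtain ⟨h, h1, h2⟩ := D_der n k i
  set e := ex (n := n) c (fun _ => s) with he
  have h3 : ∀ j ∈ univ.erase i, coeff e ((y - x i) * x i * P * (T n m * h j)) =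
      k * L n m k c s (Q j) := by
    intro j hj
    have hj' : j ≠ i := by simpa using hj
    have hs : sw i j (h j) = - h j := by
      have e1 := congrArg (sw i j) (h1 j hj')
      simp only [map_mul, map_sub, sw_x, sw_D, map_natCast, map_ofNat, Equiv.swap_apply_left,
        Equiv.swap_apply_right] at e1
      rw [← h1 j hj'] at e1
      apply mul_left_cancel₀ (x_sub_ne hj'.symm)
      linear_combination -e1
    have e2 := coeff_sw c (fun _ => s) i j rfl ((y - x i) * x i * P * (T n m * h j))
    rw [map_mul, map_mul _ (T n m), sw_T, hs] at e2
    have e3 : ((y - x i) * x i * P) * (T n m * h j) -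
        sw i j ((y - x i) * x i * P) * (T n m * h j) = C (2 * k : ℚ) * (Q j * (T n m * D n k)) := by
      rw [← sub_mul, hQ j hj']
      simp only [map_mul, map_natCast, map_ofNat]
      linear_combination Q j * T n m * h1 j hj'
    have e4 := congrArg (coeff e) e3
    rw [coeff_C_mul, coeff_sub] at e4
    rw [mul_neg, mul_neg, coeff_neg] at e2
    rw [L]
    rw [← he] at e2 ⊢
    linarith
  have h4 := coeff_euler e i.succ ((y - x i) * P * (T n m * D n k))
  rw [he, ex_succ, ← he] at h4
  rw [L, ← he, ← h4, Finset.mul_sum, ← Finset.sum_congr rfl h3]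
  simp only [L]
  have h5 : X i.succ * pderiv i.succ ((y - x i) * P * (T n m * D n k)) =
     x i * pderiv i.succ ((y - x i) * P) * (T n m * D n k) - C (m : ℚ) * (x i * P * (T n m * D n k))
     + ∑ j ∈ univ.erase i, (y - x i) * x i * P * (T n m * h j) := by
    rw [← Finset.mul_sum, ← Finset.mul_sum, ← h2, Derivation.leibniz _ ((y - x i) * P),
      Derivation.leibniz _ (T n m)]
    simp only [smul_eq_mul, map_natCast]
    linear_combination x i * P * D n k * T_der n m i
  rw [h5, coeff_add, coeff_sub, coeff_C_mul, coeff_sum]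

lemma sw_prod {n : ℕ} (i j : Fin n) (R : Finset (Fin n)) (h : i ∈ R ↔ j ∈ R) :
    sw i j (∏ l ∈ R, x l : Pol n) = ∏ l ∈ R, x l := by
  simp only [map_prod, sw_x]
  apply Finset.prod_equiv (Equiv.swap i j)
  · intro l
    rw [Equiv.swap_apply_def]; split_ifs <;> simp_all
  · intro l _; rfl

lemma pd_prod {n : ℕ} (i : Fin n) (R : Finset (Fin n)) (h : i ∉ R) :
    pderiv i.succ (∏ l ∈ R, x l : Pol n) = 0 := by
  induction R using Finset.induction_on with
  | empty => simp
  | insert a s ha ih =>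
    rw [Finset.prod_insert ha, Derivation.leibniz, ih (fun h' => h (Finset.mem_insert_of_mem h')),
      pd_ne (fun h' => h (by simp [h']))]
    simp

lemma step1 {n m k c s : ℕ} (d : ℕ) (i : Fin n) (R : Finset (Fin n)) (hi : i ∉ R) :
    ((s : ℚ) - k * ((n : ℚ) - 1 - R.card)) * L n m k c s (y ^ (d + 1) * ∏ l ∈ R, x l) =
      ((s : ℚ) - 1 - m - k * (2 * ((n : ℚ) - 1) - R.card)) *
        L n m k c s (y ^ d * ∏ l ∈ insert i R, x l) := by
  set P : Pol n := y ^ d * ∏ l ∈ R, x l with hP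
  have h0 : (y ^ (d + 1) * ∏ l ∈ R, x l : Pol n) = y * P := by rw [hP]; ring
  have h1 : (y ^ d * ∏ l ∈ insert i R, x l : Pol n) = x i * P := by
    rw [hP, Finset.prod_insert hi]; ring
  rw [h0, h1]
  have hpd : pderiv i.succ P = 0 := by
    rw [hP, Derivation.leibniz, pd_prod i R hi, Derivation.leibniz_pow, pd_y]; simp
  have hsw : ∀ j, j ∉ R → sw i j P = P := by
    intro j hj
    rw [hP, map_mul, map_pow, sw_y, sw_prod _ _ _ (by simp [hi, hj])]
  have hk := key (n := n) (m := m) (k := k) (c := c) (s := s) i P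
    (fun j => if j ∈ R then - (x i * P) else (y - x i - x j) * P) (by
      intro j hj
      split_ifs with hjR
      · have e1 : P = x j * (y ^ d * ∏ l ∈ R.erase j, x l) := by
          rw [hP, ← Finset.mul_prod_erase _ _ hjR]; ring
        have e2 : sw i j (y ^ d * ∏ l ∈ R.erase j, x l : Pol n) = y ^ d * ∏ l ∈ R.erase j, x l := by
          rw [map_mul, map_pow, sw_y, sw_prod _ _ _ (by simp [hi])]
        rw [e1]
        simp only [map_mul, map_sub, sw_x, sw_y, Equiv.swap_apply_left, Equiv.swap_apply_right] at e2 ⊢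
        rw [e2]; ring
      · simp only [map_mul, map_sub, sw_x, sw_y, Equiv.swap_apply_left, hsw j hjR]
        ring)
  have hL : ∀ j ∈ univ.erase i, L n m k c s (if j ∈ R then - (x i * P) else (y - x i - x j) * P) =
      if j ∈ R then - L n m k c s (x i * P) else L n m k c s (y * P) - 2 * L n m k c s (x i * P) := by
    intro j _
    split_ifs with hjR
    · rw [L_neg]
    · have := L_sw (n := n) (m := m) (k := k) (c := c) (s := s) i j (x i * P)
      rw [map_mul, sw_x, Equiv.swap_apply_left, hsw j hjR] at this
      rw [sub_mul, sub_mul, L_sub, L_sub, this]; ring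
  rw [Finset.sum_congr rfl hL, Finset.sum_ite, Finset.sum_const, Finset.sum_const] at hk
  have c1 : (univ.erase i).filter (· ∈ R) = R := by
    ext j; simp only [mem_filter, mem_erase, mem_univ, and_true, and_iff_right_iff_imp]
    rintro h rfl; exact hi h
  have c2 : (((univ.erase i).filter (· ∉ R)).card : ℚ) = (n : ℚ) - 1 - R.card := by
    have := Finset.card_filter_add_card_filter_not (s := univ.erase i) (· ∈ R)
    rw [c1, Finset.card_erase_of_mem (mem_univ i), Finset.card_univ, Fintype.card_fin] at this
    have hn : 1 ≤ n := by have := i.2; omega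
    have h' : R.card + ((univ.erase i).filter (· ∉ R)).card + 1 = n := by omega
    have h'' := congrArg (fun t : ℕ => (t : ℚ)) h'
    push_cast at h''; linarith
  rw [c1, nsmul_eq_mul, nsmul_eq_mul, c2] at hk
  have e3 : x i * pderiv i.succ ((y - x i) * P) = - (x i * P) := by
    rw [Derivation.leibniz, hpd, map_sub, pd_y, pd_self]; simp
  rw [e3, L_neg, sub_mul, L_sub] at hk
  linear_combination hk

lemma step2 {n m k c s : ℕ} (p q : Fin n) (hpq : p ≠ q) :
    ((s : ℚ) - 1 - k * n) * L n m k c s (y * ∏ l ∈ univ.erase q, x l) =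
      ((s : ℚ) - 2 - m - 2 * k * ((n : ℚ) - 1)) * L n m k c s (x p * ∏ l ∈ univ.erase q, x l)
      - k * L n m k c s (∏ l, x l) := by
  set P : Pol n := ∏ l ∈ univ.erase q, x l with hP
  set W : Pol n := ∏ l ∈ (univ.erase q).erase p, x l with hW
  have hPW : P = x p * W := by rw [hP, hW, Finset.mul_prod_erase _ _ (by simp [hpq])]
  have hA : (∏ l, x l : Pol n) = x q * x p * W := by
    rw [mul_assoc, ← hPW, hP, Finset.mul_prod_erase _ _ (mem_univ q)]
  have hWsw : sw p q W = W := sw_prod _ _ _ (by simp)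
  have hsw : ∀ j, j ≠ q → sw p j P = P := by
    intro j hj
    exact sw_prod _ _ _ (by simp [hj, hpq])
  have hk := key (n := n) (m := m) (k := k) (c := c) (s := s) p P
    (fun j => if j = q then (y * (x p + x q) - x p ^ 2 - x p * x q - x q ^ 2) * W
      else (y - x p - x j) * P) (by
      intro j hj
      split_ifs with hjR
      · subst hjR
        rw [hPW]
        simp only [map_mul, map_sub, sw_x, sw_y, Equiv.swap_apply_left, hWsw]
        ring
      · simp only [map_mul, map_sub, sw_x, sw_y, Equiv.swap_apply_left, hsw j hjR]
        ring)
  have hL : ∀ j ∈ (univ.erase p).erase q, L n m k c s (if j = q then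
      (y * (x p + x q) - x p ^ 2 - x p * x q - x q ^ 2) * W else (y - x p - x j) * P) =
      L n m k c s (y * P) - 2 * L n m k c s (x p * P) := by
    intro j hj
    have hjR : j ≠ q := by simp at hj; exact hj.1
    rw [if_neg hjR]
    have := L_sw (n := n) (m := m) (k := k) (c := c) (s := s) p j (x p * P)
    rw [map_mul, sw_x, Equiv.swap_apply_left, hsw j hjR] at this
    rw [sub_mul, sub_mul, L_sub, L_sub, this]; ring
  have s1 := L_sw (n := n) (m := m) (k := k) (c := c) (s := s) p q (x p * P)
  have s2 := L_sw (n := n) (m := m) (k := k) (c := c) (s := s) p q (y * P)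
  rw [hPW] at s1 s2
  simp only [map_mul, sw_x, sw_y, Equiv.swap_apply_left, hWsw] at s1 s2
  rw [← Finset.add_sum_erase _ _ (show q ∈ univ.erase p by simp [hpq.symm]),
    Finset.sum_congr rfl hL, Finset.sum_const, if_pos rfl, nsmul_eq_mul] at hk
  have c2 : ((((univ : Finset (Fin n)).erase p).erase q).card : ℚ) = (n : ℚ) - 2 := by
    have h1 := Finset.card_erase_add_one (show q ∈ univ.erase p by simp [hpq.symm])
    have h2 := Finset.card_erase_add_one (mem_univ p)
    rw [Finset.card_univ, Fintype.card_fin, ← h1] at h2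
    have h'' := congrArg (fun t : ℕ => (t : ℚ)) h2
    push_cast at h''; linarith
  rw [c2] at hk
  have e3 : x p * pderiv p.succ ((y - x p) * P) = y * P - x p * P - x p * P := by
    rw [hPW, Derivation.leibniz, Derivation.leibniz _ (x p), pd_prod _ _ (by simp), map_sub, pd_y,
      pd_self]
    simp only [smul_eq_mul]
    ring
  have e4 : (y * (x p + x q) - x p ^ 2 - x p * x q - x q ^ 2) * W
     = y * P + y * (x q * W) - x p * P - ∏ l, x l - x q * (x q * W) := by
    rw [hA, hPW]; ring
  rw [e4] at hk
  rw [← hPW] at s1 s2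
  rw [e3] at hk
  simp only [L_sub, L_add, s1, s2, sub_mul] at hk
  linear_combination hk

lemma ex_add {n : ℕ} (c d : ℕ) (g g' : Fin n → ℕ) :
    ex (c + d) (fun l => g l + g' l) = ex d g' + ex c g := by
  ext t
  refine Fin.cases ?_ (fun l => ?_) t
  · simp [ex, add_comm]
  · simp [ex, add_comm]

lemma coeff_shift {n : ℕ} (c d : ℕ) (g g' : Fin n → ℕ) (p : Pol n) :
    coeff (ex (c + d) (fun l => g l + g' l)) (y ^ d * (∏ l, x l ^ g' l) * p) = coeff (ex c g) p := by
  have : (y ^ d * (∏ l, x l ^ g' l) : Pol n) = monomial (ex d g') 1 := by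
    rw [monomial_eq, Finsupp.prod_fintype _ _ (by simp), Fin.prod_univ_succ]
    simp [ex]
  rw [this, ex_add, coeff_monomial_mul, one_mul]

def Mor (n a b k : ℕ) : ℚ :=
  coeff (ex (n * a) (fun _ : Fin n => b + (n - 1) * k))
    ((∏ l : Fin n, (y - x l) ^ a * (x l - y) ^ b) * D n k)

lemma T_sign (n a b : ℕ) :
    (∏ l : Fin n, (y - x l : Pol n) ^ a * (x l - y) ^ b) = C ((-1 : ℚ) ^ (n * b)) * T n (a + b) := by
  rw [T]
  have : ∀ l : Fin n, (y - x l : Pol n) ^ a * (x l - y) ^ b = C ((-1 : ℚ) ^ b) * (y - x l) ^ (a + b) := by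
    intro l
    rw [← neg_sub y (x l), neg_pow, pow_add]
    simp only [map_pow, map_neg, map_one]; ring
  rw [Finset.prod_congr rfl (fun l _ => this l), Finset.prod_mul_distrib, Finset.prod_const,
    Finset.card_univ, Fintype.card_fin, ← map_pow, ← pow_mul, mul_comm b n]

lemma Mor_eq (n a b k : ℕ) : Mor n a b k = (-1) ^ (n * b) *
    coeff (ex (n * a) (fun _ : Fin n => b + (n - 1) * k)) (T n (a + b) * D n k) := by
  rw [Mor, T_sign, mul_assoc, coeff_C_mul]

lemma L_top (n m k c s : ℕ) :
    L n m k c (s + 1) (∏ l, x l) = coeff (ex c (fun _ : Fin n => s)) (T n m * D n k) := by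
  have := coeff_shift c 0 (fun _ : Fin n => s) (fun _ => 1) (T n m * D n k)
  simpa [L] using this

lemma L_bot (n m k c d s : ℕ) :
    L n m k (c + d) s (y ^ d) = coeff (ex c (fun _ : Fin n => s)) (T n m * D n k) := by
  have := coeff_shift c d (fun _ : Fin n => s) (fun _ => 0) (T n m * D n k)
  simpa [L] using this

lemma chain (n a b k c : ℕ) (R : Finset (Fin n)) : ∀ d, d + R.card = n →
    L n (a + b + 1) k c (b + 1 + (n - 1) * k) (y ^ d * ∏ l ∈ R, x l) *
      ∏ r ∈ range R.card, (-((a : ℚ) + 1 + k * ((n : ℚ) - 1 - r))) =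
    (∏ r ∈ range R.card, ((b : ℚ) + 1 + k * r)) *
      L n (a + b + 1) k c (b + 1 + (n - 1) * k) (y ^ n) := by
  induction R using Finset.induction_on with
  | empty => intro d hd; simp at hd; subst hd; simp
  | insert i R hi ih =>
    intro d hd
    rw [Finset.card_insert_of_notMem hi] at hd ⊢
    have h1 := ih (d + 1) (by omega)
    have h2 := step1 (m := a + b + 1) (k := k) (c := c) (s := b + 1 + (n - 1) * k) d i R hi
    rw [Finset.prod_range_succ, Finset.prod_range_succ]
    have hn : ((n - 1 : ℕ) : ℚ) = n - 1 := by
      have : 1 ≤ n := by omega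
      push_cast [this]; ring
    push_cast [hn] at h2
    rw [mul_right_comm _ _ (L _ _ _ _ _ _), ← h1]
    linear_combination (-1 : ℚ) * (∏ r ∈ range R.card, (-((a : ℚ) + 1 + k * ((n : ℚ) - 1 - r)))) * h2

lemma Mor_rec (n a b k : ℕ) :
    Mor n (a + 1) b k * ∏ r ∈ range n, ((a : ℚ) + 1 + k * r) =
      (∏ r ∈ range n, ((b : ℚ) + 1 + k * r)) * Mor n a (b + 1) k := by
  have h := chain n a b k (n * (a + 1)) univ 0 (by simp)
  rw [pow_zero, one_mul, Finset.card_univ, Fintype.card_fin,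
    show b + 1 + (n - 1) * k = b + (n - 1) * k + 1 by ring, L_top,
    show n * (a + 1) = n * a + n by ring, L_bot] at h
  rw [Mor_eq, Mor_eq, show n * (a + 1) = n * a + n by ring,
    show a + 1 + b = a + b + 1 by ring, show a + (b + 1) = a + b + 1 by ring,
    show b + 1 + (n - 1) * k = b + (n - 1) * k + 1 by ring]
  have h2 : ∏ r ∈ range n, (-((a : ℚ) + 1 + k * ((n : ℚ) - 1 - r))) =
      (-1) ^ n * ∏ r ∈ range n, ((a : ℚ) + 1 + k * r) := by
    rw [← Finset.prod_range_reflect, Finset.prod_neg, Finset.card_range]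
    rw [Finset.prod_range_reflect (fun r => ((a : ℚ) + 1 + k * ((n : ℚ) - 1 - r)))]
    rw [← Finset.prod_range_reflect]
    congr 1
    apply Finset.prod_congr rfl
    intro r hr
    rw [Finset.mem_range] at hr
    have : ((n - 1 - r : ℕ) : ℚ) = n - 1 - r := by
      rw [Nat.sub_sub, Nat.cast_sub (by omega)]; push_cast; ring
    rw [this]; ring
  rw [h2] at h
  have h3 : ((-1 : ℚ) ^ n) * (-1) ^ n = 1 := by rw [← mul_pow]; simp
  rw [mul_add, pow_add, mul_one]
  linear_combination (-1) ^ (n * b) * (-1) ^ n * h - ((-1) ^ (n * b) *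
    coeff (ex (n * a + n) (fun _ : Fin n => b + (n - 1) * k)) (T n (a + b + 1) * D n k) * ∏ r ∈ range n, ((a : ℚ) + 1 + k * r)) * h3

def Dy (n k : ℕ) : MvPolynomial (Fin n) ℚ := ∏ j : Fin n, ∏ i ∈ univ.erase j, (X j - X i) ^ k

lemma Mor_zero (n a k : ℕ) : Mor n a 0 k =
    coeff (Finsupp.equivFunOnFinite.symm (fun _ : Fin n => (n - 1) * k)) (Dy n k) := by
  have he : ex (n * a) (fun _ : Fin n => 0 + (n - 1) * k) =
    (Finsupp.equivFunOnFinite.symm (fun _ : Fin n => (n - 1) * k)).cons (n * a) := by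
    ext t
    refine Fin.cases ?_ (fun l => ?_) t <;> simp [ex]
  rw [Mor, he, ← finSuccEquiv_coeff_coeff]
  congr 1
  have hD : finSuccEquiv ℚ n (D n k) = Polynomial.C (Dy n k) := by
    simp only [D, Dy, map_prod, map_pow, map_sub, x, finSuccEquiv_X_succ]
  have hT : finSuccEquiv ℚ n (∏ l : Fin n, (y - x l) ^ a * (x l - y) ^ 0) =
      ∏ l : Fin n, (Polynomial.X - Polynomial.C (X l)) ^ a := by
    simp only [map_prod, map_pow, map_sub, x, y, finSuccEquiv_X_succ, finSuccEquiv_X_zero, pow_zero,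
      mul_one]
  have hm : ∀ l ∈ (univ : Finset (Fin n)),
      ((Polynomial.X - Polynomial.C (X l : MvPolynomial (Fin n) ℚ)) ^ a).Monic := by
    intro l _; exact (Polynomial.monic_X_sub_C _).pow a
  have hd : (∏ l : Fin n, (Polynomial.X - Polynomial.C (X l : MvPolynomial (Fin n) ℚ)) ^ a).natDegree
      = n * a := by
    rw [Polynomial.natDegree_prod_of_monic _ _ hm]
    simp
  rw [map_mul, hD, hT, Polynomial.coeff_mul_C]
  have := Polynomial.monic_prod_of_monic _ _ hm
  rw [Polynomial.Monic, Polynomial.leadingCoeff, hd] at this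
  rw [this, one_mul]

lemma Dy_succ (n k : ℕ) : Dy (n + 1) k =
    (∏ l : Fin n, (y - x l) ^ k * (x l - y) ^ k) * D n k := by
  have h : ∀ (N : ℕ) (j : Fin N) (f : Fin N → Pol n),
      ∏ i ∈ univ.erase j, f i = ∏ i, if i ≠ j then f i else 1 := by
    intro N j f
    rw [← Finset.prod_filter, Finset.filter_ne']
  rw [Dy, D]
  simp only [h]
  rw [Fin.prod_univ_succ, Fin.prod_univ_succ]
  simp only [Fin.prod_univ_succ (n := n), Finset.prod_mul_distrib]
  simp [Fin.succ_ne_zero, Fin.succ_inj, (Fin.succ_ne_zero _).symm, mul_assoc, x, y]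

lemma Mor_zero_succ (n a k : ℕ) : Mor (n + 1) a 0 k = Mor n k k k := by
  rw [Mor_zero, Dy_succ, Mor]
  congr 1
  ext t
  refine Fin.cases ?_ (fun l => ?_) t
  · simp [ex]
  · simp only [ex, Finsupp.equivFunOnFinite_symm_apply_apply, Fin.cons_succ]
    have : 1 ≤ n := by have := l.2; omega
    obtain ⟨N, rfl⟩ := Nat.exists_eq_add_of_le' this
    simp only [Nat.add_sub_cancel]; ring

def Mr (n a b k : ℕ) : ℚ := ∏ l ∈ Finset.range n,
      (((a + b + k * l).factorial * (k * (l + 1)).factorial : ℚ) /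
        ((a + k * l).factorial * (b + k * l).factorial * k.factorial))

lemma Mr_rec (n a b k : ℕ) :
    Mr n (a + 1) b k * ∏ r ∈ range n, ((a : ℚ) + 1 + k * r) =
      (∏ r ∈ range n, ((b : ℚ) + 1 + k * r)) * Mr n a (b + 1) k := by
  rw [Mr, Mr, ← Finset.prod_mul_distrib, ← Finset.prod_mul_distrib]
  apply Finset.prod_congr rfl
  intro l _
  have p1 := Nat.factorial_pos (a + k * l)
  have p2 := Nat.factorial_pos (b + k * l)
  have p3 := Nat.factorial_pos k
  rw [show a + 1 + k * l = a + k * l + 1 by ring, show b + 1 + k * l = b + k * l + 1 by ring,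
    Nat.factorial_succ, Nat.factorial_succ, show a + (b + 1) + k * l = a + 1 + b + k * l by ring]
  push_cast
  field_simp
  ring

lemma Mr_diag (n k : ℕ) : Mr n k k k = ((k * (n + 1)).factorial : ℚ) / k.factorial ^ (n + 1) := by
  induction n with
  | zero => simp [Mr]; rw [div_self]; positivity
  | succ n ih =>
    rw [Mr, Finset.prod_range_succ, ← Mr, ih, show k + k + k * n = k * (n + 1 + 1) by ring,
      show k + k * n = k * (n + 1) by ring]
    have p1 := Nat.factorial_pos (k * (n + 1))
    field_simp
    ring

lemma Mr_zero (n a k : ℕ) : Mr n a 0 k = ((k * n).factorial : ℚ) / k.factorial ^ n := by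
  induction n with
  | zero => simp [Mr]
  | succ n ih =>
    rw [Mr, Finset.prod_range_succ, ← Mr, ih, show a + 0 + k * n = a + k * n by ring,
      show 0 + k * n = k * n by ring]
    have p1 := Nat.factorial_pos (k * n)
    have p2 := Nat.factorial_pos (a + k * n)
    field_simp
    ring

lemma Mor_zero_zero (a k : ℕ) : Mor 0 a 0 k = 1 := by
  rw [Mor_zero, Dy]
  simp only [Finset.univ_eq_empty, Finset.prod_empty]
  rw [coeff_one, if_pos]
  exact Subsingleton.elim _ _

theorem morris (n : ℕ) : ∀ b a k, Mor n a b k = Mr n a b k := by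
  induction n with
  | zero =>
    intro b
    induction b with
    | zero => intro a k; rw [Mor_zero_zero, Mr]; simp
    | succ b ih =>
      intro a k
      have h := Mor_rec 0 a b k
      rw [ih] at h
      simpa [Mr] using h.symm
  | succ n ihn =>
    intro b
    induction b with
    | zero => intro a k; rw [Mor_zero_succ, ihn, Mr_zero, Mr_diag]
    | succ b ih =>
      intro a k
      have h := Mor_rec (n + 1) a b k
      rw [ih, Mr_rec] at h
      refine (mul_left_cancel₀ ?_ h).symm
      apply Finset.prod_ne_zero_iff.mpr
      intro r _
      positivity


lemma CT_eq (n₀ a b k : ℕ) (p q : Fin (n₀ + 2)) (hp : (p : ℕ) = n₀) (hq : (q : ℕ) = n₀ + 1) :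
    forresterCT n₀ 2 a b k = (-1) ^ ((n₀ + 2) * b) *
      (2 * L (n₀ + 2) (a + b) k ((n₀ + 2) * a) (b + (n₀ + 1) * k + 1) (∏ l, x l)
       - L (n₀ + 2) (a + b) k ((n₀ + 2) * a) (b + (n₀ + 1) * k + 1) (x p * ∏ l ∈ univ.erase q, x l)
       - L (n₀ + 2) (a + b) k ((n₀ + 2) * a) (b + (n₀ + 1) * k + 1)
          (x q * ∏ l ∈ univ.erase p, x l)) := by
  have hpq : p ≠ q := by intro h; rw [h] at hp; omega
  have hf : (univ.filter (fun l : Fin (n₀ + 2) => n₀ ≤ (l : ℕ))) = {p, q} := by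
    ext l
    simp only [mem_filter, mem_univ, true_and, mem_insert, mem_singleton, Fin.ext_iff]
    omega
  set W : Pol (n₀ + 2) := ∏ l ∈ (univ.erase q).erase p, x l with hW
  have h1 : ∏ l ∈ univ.erase q, x l = x p * W := by
    rw [hW, Finset.mul_prod_erase _ _ (by simp [hpq])]
  have h2 : ∏ l ∈ univ.erase p, x l = x q * W := by
    rw [hW, Finset.erase_right_comm, Finset.mul_prod_erase _ _ (by simp [hpq.symm])]
  have h3 : (∏ l, x l : Pol (n₀ + 2)) = x q * (x p * W) := by
    rw [← h1, Finset.mul_prod_erase _ _ (mem_univ q)]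
  have hWe : (∏ l, x l ^ (if n₀ ≤ (l : ℕ) then 0 else 1) : Pol (n₀ + 2)) = W := by
    rw [hW, ← Finset.prod_subset (Finset.subset_univ ((univ.erase q).erase p))]
    · apply Finset.prod_congr rfl
      intro l hl
      simp only [mem_erase, mem_univ, and_true, ne_eq, Fin.ext_iff] at hl
      rw [if_neg (by omega), pow_one]
    · intro l _ hl
      simp only [mem_erase, mem_univ, and_true, ne_eq, Fin.ext_iff] at hl
      rw [if_pos (by omega), pow_zero]
  have hT := T_sign (n₀ + 2) a b
  rw [forresterCT, hf, Finset.prod_pair hpq,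
    show ({p, q} : Finset (Fin (n₀ + 2))).erase p = {q} by
      ext l; simp only [mem_erase, mem_insert, mem_singleton]
      constructor
      · tauto
      · rintro rfl; exact ⟨hpq.symm, Or.inr rfl⟩,
    show ({p, q} : Finset (Fin (n₀ + 2))).erase q = {p} by
      ext l; simp only [mem_erase, mem_insert, mem_singleton]
      constructor
      · tauto
      · rintro rfl; exact ⟨hpq, Or.inl rfl⟩,
    Finset.prod_singleton, Finset.prod_singleton]
  have hs := coeff_shift ((n₀ + 2) * a) 0
    (fun l : Fin (n₀ + 2) => b + (n₀ + 2 - 1) * k + (if n₀ ≤ (l : ℕ) then 2 - 1 else 0))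
    (fun l => if n₀ ≤ (l : ℕ) then 0 else 1)
    ((x p - x q) * (x q - x p) * (∏ l : Fin (n₀ + 2), (y - x l) ^ a * (x l - y) ^ b) * D (n₀ + 2) k)
  have he : (fun l : Fin (n₀ + 2) => b + (n₀ + 2 - 1) * k + (if n₀ ≤ (l : ℕ) then 2 - 1 else 0) +
      (if n₀ ≤ (l : ℕ) then 0 else 1)) = fun _ => b + (n₀ + 1) * k + 1 := by
    funext l
    split_ifs <;> simp
  rw [he, hWe, hT] at hs
  have hT' := hT
  simp only [x, y] at hT'
  have hDD : D (n₀ + 2) k = ∏ j : Fin (n₀ + 2), ∏ i ∈ Finset.univ.erase j,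
        (X j.succ - X i.succ : MvPolynomial (Fin (n₀ + 2 + 1)) ℚ) ^ k := rfl
  rw [hT', ← hDD]
  refine hs.symm.trans ?_
  have e : y ^ 0 * W * ((x p - x q) * (x q - x p) * (C ((-1 : ℚ) ^ ((n₀ + 2) * b)) *
      T (n₀ + 2) (a + b)) * D (n₀ + 2) k) = C ((-1 : ℚ) ^ ((n₀ + 2) * b)) *
      (((∏ l, x l) + (∏ l, x l) - x p * ∏ l ∈ univ.erase q, x l - x q * ∏ l ∈ univ.erase p, x l) *
        (T (n₀ + 2) (a + b) * D (n₀ + 2) k)) := by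
    rw [h1, h2, h3]; ring
  rw [e, coeff_C_mul, add_zero]
  congr 1
  rw [← L, L_sub, L_sub, L_add]; ring

lemma C_val (n a b k : ℕ) (p q : Fin (n + 2)) (hpq : p ≠ q) :
    ((b : ℚ) + 1 + k * (n + 1)) * ((a : ℚ) + 1 + k * (n + 1)) *
      L (n + 2) (a + b) k ((n + 2) * a) (b + (n + 1) * k + 1) (x p * ∏ l ∈ univ.erase q, x l) =
    (-(a : ℚ) * (k - b) - k * ((b : ℚ) + 1 + k * (n + 1))) *
      L (n + 2) (a + b) k ((n + 2) * a) (b + (n + 1) * k + 1) (∏ l, x l) := by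
  have h1 := step1 (m := a + b) (k := k) (c := (n + 2) * a) (s := b + (n + 1) * k + 1) 0 q
    (univ.erase q) (by simp)
  have h2 := step2 (m := a + b) (k := k) (c := (n + 2) * a) (s := b + (n + 1) * k + 1) p q hpq
  rw [Finset.insert_erase (mem_univ q), Finset.card_erase_of_mem (mem_univ q), Finset.card_univ,
    Fintype.card_fin, pow_zero, one_mul, zero_add, pow_one] at h1
  rw [show n + 2 - 1 = n + 1 by omega] at h1
  push_cast at h1 h2
  linear_combination ((b : ℚ) + 1 + k * (n + 1)) * h2 - ((b : ℚ) - k) * h1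

lemma final_alg (n₀ a b k : ℕ) :
    ((b : ℚ) + 1 + k * (n₀ + 1)) * ((a : ℚ) + 1 + k * (n₀ + 1)) * forresterRHS n₀ 2 a b k =
      2 * (1 + k * (n₀ + 2)) * (a + b + 1 + k * (n₀ + 1)) * Mr (n₀ + 2) a b k := by
  rw [forresterRHS, Mr, Finset.prod_range_succ, Finset.prod_range_succ, Finset.prod_range_succ,
    Finset.prod_range_succ, Finset.prod_range_zero]
  have e1 : (k + 1) * 1 + a + b + k * n₀ = (a + b + k * (n₀ + 1)) + 1 := by ring
  have e2 : k * 1 + k + 1 + k * n₀ = k * (n₀ + 1 + 1) + 1 := by ring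
  have e3 : (k + 1) * 1 + a + k * n₀ = (a + k * (n₀ + 1)) + 1 := by ring
  have e4 : (k + 1) * 1 + b + k * n₀ = (b + k * (n₀ + 1)) + 1 := by ring
  have e5 : (k + 1) * 0 + a + b + k * n₀ = a + b + k * n₀ := by ring
  have e6 : k * 0 + k + 0 + k * n₀ = k * (n₀ + 1) := by ring
  have e7 : (k + 1) * 0 + a + k * n₀ = a + k * n₀ := by ring
  have e8 : (k + 1) * 0 + b + k * n₀ = b + k * n₀ := by ring
  rw [e1, e2, e3, e4, e5, e6, e7, e8]
  simp only [Nat.factorial_succ]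
  have p1 := Nat.factorial_pos (a + k * n₀)
  have p2 := Nat.factorial_pos (b + k * n₀)
  have p3 := Nat.factorial_pos (a + k * (n₀ + 1))
  have p4 := Nat.factorial_pos (b + k * (n₀ + 1))
  have p5 := Nat.factorial_pos k
  generalize (∏ l ∈ Finset.range n₀,
      (((a + b + k * l).factorial * (k * (l + 1)).factorial : ℚ) /
        ((a + k * l).factorial * (b + k * l).factorial * k.factorial))) = Z
  push_cast
  field_simp
  ring

end Forr
end

/-- **Forrester's conjecture in the case `n₁ = 2`** (Corollary 5.3, first case). -/
theorem forrester_n1_eq_two (n₀ a b k : ℕ) :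
    forresterCT n₀ 2 a b k = forresterRHS n₀ 2 a b k := by
  have h0 := Forr.CT_eq n₀ a b k ⟨n₀, by omega⟩ ⟨n₀ + 1, by omega⟩ rfl rfl
  have h1 := Forr.C_val n₀ a b k ⟨n₀, by omega⟩ ⟨n₀ + 1, by omega⟩ (by simp)
  have h2 := Forr.C_val n₀ a b k ⟨n₀ + 1, by omega⟩ ⟨n₀, by omega⟩ (by simp)
  have h3 := Forr.final_alg n₀ a b k
  rw [← Forr.morris, Forr.Mor_eq, show n₀ + 2 - 1 = n₀ + 1 by omega, ← Forr.L_top] at h3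
  have hne : ((b : ℚ) + 1 + k * (n₀ + 1)) * ((a : ℚ) + 1 + k * (n₀ + 1)) ≠ 0 := by positivity
  apply mul_left_cancel₀ hne
  rw [h3, h0]
  linear_combination (-(-1 : ℚ) ^ ((n₀ + 2) * b)) * (h1 + h2)
end

section
/- Forrester's conjecture holds for $n_1 = n-1$: for nonnegative integers $a, b, k$ and $n\ge 1$ with $n_0 = 1$, the constant term $\mathrm{CT}_x \prod_{i,j=2,\,i\ne j}^{n}(1-x_i/x_j)\, H(x_0,\ldots,x_n;a,b,k)$ equals $M_1(a,b,k)\prod_{j=0}^{n-2}\frac{(j+1)((k+1)j+a+b+k)!\,(kj+k+j+k)!}{k!\,((k+1)j+a+k)!\,((k+1)j+b+k)!}$. -/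
open MvPolynomial Finset

noncomputable def pairing {n : ℕ} (f : (Fin n →₀ ℕ) → Polynomial ℚ) :
    MvPolynomial (Fin n) ℚ →ₗ[ℚ] Polynomial ℚ :=
  (basisMonomials (Fin n) ℚ).constr ℚ f

lemma pairing_monomial {n : ℕ} (f : (Fin n →₀ ℕ) → Polynomial ℚ) (e : Fin n →₀ ℕ) (c : ℚ) :
    pairing f (monomial e c) = c • f e := by
  have h : (monomial e c : MvPolynomial (Fin n) ℚ) = c • basisMonomials (Fin n) ℚ e := by
    simp [coe_basisMonomials, smul_monomial]
  rw [h, map_smul, pairing, Module.Basis.constr_basis]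

lemma pairing_eq_sum {n : ℕ} (f : (Fin n →₀ ℕ) → Polynomial ℚ) (G : MvPolynomial (Fin n) ℚ) :
    pairing f G = ∑ e ∈ G.support, coeff e G • f e := by
  conv_lhs => rw [G.as_sum]
  rw [map_sum]
  exact Finset.sum_congr rfl fun e _ => pairing_monomial f e _

lemma pairing_X_sub_mul {n : ℕ} (f : (Fin n →₀ ℕ) → Polynomial ℚ) (i j : Fin n)
    (H : MvPolynomial (Fin n) ℚ) :
    pairing f ((X j - X i) * H) =
      pairing (fun e => f (e + Finsupp.single j 1) - f (e + Finsupp.single i 1)) H := by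
  induction H using MvPolynomial.induction_on' with
  | monomial e c =>
    rw [sub_mul, map_sub, pairing_monomial, X, X, monomial_mul, monomial_mul, pairing_monomial,
      pairing_monomial, one_mul, smul_sub, add_comm e, add_comm e]
  | add p q hp hq => rw [mul_add, map_add, map_add, hp, hq]

/-- `PD M D f`: `f` is a polynomial function of degree `< D` in the variables from `M`. -/
def PD {n : ℕ} (M : Finset (Fin n)) : ℕ → ((Fin n →₀ ℕ) → Polynomial ℚ) → Prop
  | 0, f => f = 0
  | D + 1, f => ∀ i ∈ M, PD M D (fun e => f (e + Finsupp.single i 1) - f e)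

lemma PD_zero {n : ℕ} (M : Finset (Fin n)) (D : ℕ) : PD M D 0 := by
  induction D with
  | zero => rfl
  | succ D ih =>
    intro i _
    convert ih using 1
    funext e; simp

lemma PD_add {n : ℕ} (M : Finset (Fin n)) (D : ℕ) : ∀ f g, PD M D f → PD M D g → PD M D (f + g) := by
  induction D with
  | zero => intro f g hf hg; simp only [PD] at *; rw [hf, hg, add_zero]
  | succ D ih =>
    intro f g hf hg i hi
    convert ih _ _ (hf i hi) (hg i hi) using 1
    funext e; simp only [Pi.add_apply]; ring

lemma PD_neg {n : ℕ} (M : Finset (Fin n)) (D : ℕ) : ∀ f, PD M D f → PD M D (-f) := by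
  induction D with
  | zero => intro f hf; simp only [PD] at *; rw [hf, neg_zero]
  | succ D ih =>
    intro f hf i hi
    convert ih _ (hf i hi) using 1
    funext e; simp only [Pi.neg_apply]; ring

lemma PD_succ {n : ℕ} (M : Finset (Fin n)) (D : ℕ) : ∀ f, PD M D f → PD M (D + 1) f := by
  induction D with
  | zero => intro f hf; simp only [PD] at hf; rw [hf]; exact PD_zero M 1
  | succ D ih => intro f hf i hi; exact ih _ (hf i hi)

lemma PD_mono {n : ℕ} (M : Finset (Fin n)) {D D' : ℕ} (h : D ≤ D') (f) (hf : PD M D f) :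
    PD M D' f := by
  induction h with
  | refl => exact hf
  | step _ ih => exact PD_succ M _ _ ih

lemma PD_shift {n : ℕ} (M : Finset (Fin n)) (j : Fin n) (D : ℕ) :
    ∀ f, PD M D f → PD M D (fun e => f (e + Finsupp.single j 1)) := by
  induction D with
  | zero => intro f hf; simp only [PD] at *; rw [hf]; rfl
  | succ D ih =>
    intro f hf i hi
    convert ih _ (hf i hi) using 1
    funext e
    rw [add_right_comm]

lemma PD_mul {n : ℕ} (M : Finset (Fin n)) (N : ℕ) : ∀ a b, a + b = N → ∀ f g,
    PD M (a + 1) f → PD M (b + 1) g → PD M (a + b + 1) (f * g) := by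
  induction N with
  | zero =>
    intro a b h f g hf hg
    obtain ⟨rfl, rfl⟩ : a = 0 ∧ b = 0 := by omega
    intro i hi
    have h1 := hf i hi
    have h2 := hg i hi
    simp only [PD] at h1 h2 ⊢
    funext e
    have h1 := congrFun h1 e
    have h2 := congrFun h2 e
    simp only [Pi.zero_apply, Pi.mul_apply] at *
    rw [sub_eq_zero.1 h1, sub_eq_zero.1 h2, sub_self]
  | succ N ih =>
    intro a b h f g hf hg i hi
    have e1 : (fun e => (f * g) (e + Finsupp.single i 1) - (f * g) e) =
      (fun e => f (e + Finsupp.single i 1) - f e) * (fun e => g (e + Finsupp.single i 1)) +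
      f * (fun e => g (e + Finsupp.single i 1) - g e) := by
      funext e; simp only [Pi.add_apply, Pi.mul_apply]; ring
    rw [e1]
    have h1 := hf i hi
    have h2 := hg i hi
    have h3 := PD_shift M i _ _ hg
    apply PD_add
    · cases a with
      | zero =>
        simp only [PD] at h1; rw [h1, zero_mul]; exact PD_zero _ _
      | succ a =>
        have := ih a b (by omega) _ _ h1 h3
        rwa [show a + 1 + b = a + b + 1 by omega]
    · cases b with
      | zero =>
        simp only [PD] at h2; rw [h2, mul_zero]; exact PD_zero _ _
      | succ b =>
        exact ih a b (by omega) _ _ hf h2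

lemma PD_prod {n : ℕ} (M : Finset (Fin n)) {ι : Type*} (S : Finset ι) (D : ι → ℕ)
    (f : ι → (Fin n →₀ ℕ) → Polynomial ℚ) (h : ∀ s ∈ S, PD M (D s + 1) (f s)) :
    PD M (∑ s ∈ S, D s + 1) (fun e => ∏ s ∈ S, f s e) := by
  classical
  induction S using Finset.induction_on with
  | empty =>
    intro i _
    simp only [Finset.prod_empty, sub_self, Finset.sum_empty]
    exact PD_zero _ _
  | insert a S ha ih =>
    rw [Finset.sum_insert ha]
    simp only [Finset.prod_insert ha]
    exact PD_mul M _ _ _ rfl (f a) _ (h a (Finset.mem_insert_self _ _))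
      (ih fun s hs => h s (Finset.mem_insert_of_mem hs))

def Kills {n : ℕ} (M : Finset (Fin n)) (G : MvPolynomial (Fin n) ℚ) (c : ℕ) : Prop :=
  ∀ D f, PD M D f → ∃ f', PD M (D - c) f' ∧ ∀ H, pairing f (G * H) = pairing f' H

lemma Kills_one {n : ℕ} (M : Finset (Fin n)) : Kills M 1 0 :=
  fun _ f hf => ⟨f, hf, fun H => by rw [one_mul]⟩

lemma Kills_mul {n : ℕ} (M : Finset (Fin n)) {G₁ G₂ : MvPolynomial (Fin n) ℚ} {c₁ c₂ : ℕ}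
    (h₁ : Kills M G₁ c₁) (h₂ : Kills M G₂ c₂) : Kills M (G₁ * G₂) (c₁ + c₂) := by
  intro D f hf
  obtain ⟨f', hf', e'⟩ := h₁ D f hf
  obtain ⟨f'', hf'', e''⟩ := h₂ _ f' hf'
  refine ⟨f'', ?_, fun H => ?_⟩
  · rwa [← Nat.sub_sub]
  · rw [mul_assoc, e', e'']

lemma Kills_prod {n : ℕ} (M : Finset (Fin n)) {ι : Type*} (S : Finset ι) (c : ι → ℕ)
    (G : ι → MvPolynomial (Fin n) ℚ) (h : ∀ s ∈ S, Kills M (G s) (c s)) :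
    Kills M (∏ s ∈ S, G s) (∑ s ∈ S, c s) := by
  classical
  induction S using Finset.induction_on with
  | empty => simpa using Kills_one M
  | insert a S ha ih =>
    rw [Finset.sum_insert ha, Finset.prod_insert ha]
    exact Kills_mul M (h a (Finset.mem_insert_self _ _))
      (ih fun s hs => h s (Finset.mem_insert_of_mem hs))

lemma Kills_pow {n : ℕ} (M : Finset (Fin n)) {G : MvPolynomial (Fin n) ℚ} {c : ℕ}
    (h : Kills M G c) (k : ℕ) : Kills M (G ^ k) (k * c) := by
  have := Kills_prod M (Finset.range k) (fun _ => c) (fun _ => G) (fun _ _ => h)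
  simpa using this

lemma Kills_X_sub {n : ℕ} (M : Finset (Fin n)) (i j : Fin n) :
    Kills M (X j - X i) (if i ∈ M ∧ j ∈ M then 1 else 0) := by
  intro D f hf
  refine ⟨_, ?_, fun H => pairing_X_sub_mul f i j H⟩
  split_ifs with h
  · cases D with
    | zero =>
      simp only [PD] at *
      rw [hf]; funext e; simp
    | succ D =>
      have := PD_add M D _ _ (hf j h.2) (PD_neg M D _ (hf i h.1))
      rw [Nat.add_sub_cancel]
      convert this using 1
      funext e; simp only [Pi.add_apply, Pi.neg_apply]; ring
  · have := PD_add M D _ _ (PD_shift M j D f hf) (PD_neg M D _ (PD_shift M i D f hf))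
    rw [Nat.sub_zero]
    convert this using 1
    funext e; simp only [Pi.add_apply, Pi.neg_apply]; ring

lemma Kills_apply {n : ℕ} (M : Finset (Fin n)) {G : MvPolynomial (Fin n) ℚ} {c D : ℕ}
    (h : Kills M G c) (hD : D ≤ c) (f) (hf : PD M D f) : pairing f G = 0 := by
  obtain ⟨f', hf', e⟩ := h D f hf
  rw [Nat.sub_eq_zero_of_le hD] at hf'
  have := e 1
  simp only [PD] at hf'
  rw [mul_one] at this
  rw [this, hf', pairing_eq_sum]
  simp

def LowDeg {n : ℕ} (S : Finset (Fin n)) (G : MvPolynomial (Fin n) ℚ) (c : ℕ) : Prop :=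
  ∀ e ∈ G.support, c ≤ ∑ l ∈ S, e l

lemma LowDeg_one {n : ℕ} (S : Finset (Fin n)) : LowDeg S 1 0 := fun _ _ => Nat.zero_le _

lemma LowDeg_mul {n : ℕ} (S : Finset (Fin n)) {G₁ G₂ : MvPolynomial (Fin n) ℚ} {c₁ c₂ : ℕ}
    (h₁ : LowDeg S G₁ c₁) (h₂ : LowDeg S G₂ c₂) : LowDeg S (G₁ * G₂) (c₁ + c₂) := by
  classical
  intro e he
  obtain ⟨e₁, he₁, e₂, he₂, rfl⟩ := Finset.mem_add.1 (support_mul _ _ he)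
  simp only [Finsupp.add_apply, Finset.sum_add_distrib]
  exact add_le_add (h₁ _ he₁) (h₂ _ he₂)

lemma LowDeg_prod {n : ℕ} (M : Finset (Fin n)) {ι : Type*} (S : Finset ι) (c : ι → ℕ)
    (G : ι → MvPolynomial (Fin n) ℚ) (h : ∀ s ∈ S, LowDeg M (G s) (c s)) :
    LowDeg M (∏ s ∈ S, G s) (∑ s ∈ S, c s) := by
  classical
  induction S using Finset.induction_on with
  | empty => simpa using LowDeg_one M
  | insert a S ha ih =>
    rw [Finset.sum_insert ha, Finset.prod_insert ha]
    exact LowDeg_mul M (h a (Finset.mem_insert_self _ _))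
      (ih fun s hs => h s (Finset.mem_insert_of_mem hs))

lemma LowDeg_pow {n : ℕ} (M : Finset (Fin n)) {G : MvPolynomial (Fin n) ℚ} {c : ℕ}
    (h : LowDeg M G c) (k : ℕ) : LowDeg M (G ^ k) (k * c) := by
  have := LowDeg_prod M (Finset.range k) (fun _ => c) (fun _ => G) (fun _ _ => h)
  simpa using this

lemma LowDeg_X_sub {n : ℕ} (M : Finset (Fin n)) (i j : Fin n) :
    LowDeg M (X j - X i) (if i ∈ M ∧ j ∈ M then 1 else 0) := by
  classical
  split_ifs with h
  · intro e he
    have h2 := support_sub _ _ _ he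
    rw [Finset.mem_union, support_X, support_X, Finset.mem_singleton, Finset.mem_singleton] at h2
    rcases h2 with rfl | rfl
    · rw [Finset.sum_eq_single_of_mem j h.2] <;> simp +contextual [eq_comm]
    · rw [Finset.sum_eq_single_of_mem i h.1] <;> simp +contextual [eq_comm]
  · exact fun _ _ => Nat.zero_le _

/-- Coefficient of `x^N` in `(1-x)^(A+b)` as a polynomial in `A`. -/
noncomputable def gpoly (b N : ℕ) : Polynomial ℚ :=
  ∏ i ∈ range N, Polynomial.C (1 / ((i : ℚ) + 1)) * (Polynomial.C ((i : ℚ) - b) - Polynomial.X)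

noncomputable def lam (b d e : ℕ) : Polynomial ℚ := if e ≤ d then gpoly b (d - e) else 0

lemma natDegree_gpoly (b N : ℕ) : (gpoly b N).natDegree ≤ N := by
  unfold gpoly
  refine (Polynomial.natDegree_prod_le _ _).trans ?_
  refine (Finset.sum_le_card_nsmul _ _ 1 ?_).trans (by simp)
  intro i _
  refine (Polynomial.natDegree_C_mul_le _ _).trans ?_
  refine (Polynomial.natDegree_sub_le _ _).trans ?_
  rw [Polynomial.natDegree_C, Polynomial.natDegree_X]; simp

lemma eval_gpoly (b N : ℕ) (x : ℚ) :
    (gpoly b N).eval x = ∏ i ∈ range N, (((i : ℚ) - b - x) / (i + 1)) := by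
  unfold gpoly
  rw [Polynomial.eval_prod]
  refine Finset.prod_congr rfl fun i _ => ?_
  simp; ring

lemma eval_gpoly_nat (b N a : ℕ) :
    (gpoly b N).eval (a : ℚ) = (-1) ^ N * ((a + b).choose N : ℚ) := by
  rw [eval_gpoly]
  induction N with
  | zero => simp
  | succ N ih =>
    rw [Finset.prod_range_succ, ih]
    have h := Nat.choose_succ_right_eq (a + b) N
    have h2 : ((a + b).choose (N + 1) : ℚ) * (N + 1) = (a + b).choose N * ((a : ℚ) + b - N) := by
      rcases le_or_gt N (a + b) with hN | hN
      · have := congrArg (Nat.cast : ℕ → ℚ) h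
        push_cast [Nat.cast_sub hN] at this
        linarith
      · rw [Nat.choose_eq_zero_of_lt hN, Nat.choose_eq_zero_of_lt (by omega)]; simp
    have h3 : ((N : ℚ) + 1) ≠ 0 := by positivity
    field_simp
    rw [pow_succ]
    linear_combination (-1) ^ N * h2

lemma prod_swap (N σ : ℕ) : ∏ i ∈ range N, (((i : ℚ) + σ + 1) / (i + 1)) =
    ∏ i ∈ range σ, (((N : ℚ) + i + 1) / (i + 1)) := by
  have key : ∀ N σ : ℕ, ∏ i ∈ range N, (((i : ℚ) + σ + 1) / (i + 1)) = ((N + σ).choose N : ℚ) := by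
    intro N σ
    induction N with
    | zero => simp
    | succ N ih =>
      rw [Finset.prod_range_succ, ih]
      have h := Nat.add_one_mul_choose_eq (N + σ) N
      have h2 := congrArg (Nat.cast : ℕ → ℚ) h
      push_cast at h2
      rw [show N + 1 + σ = N + σ + 1 by omega]
      have h3 : ((N : ℚ) + 1) ≠ 0 := by positivity
      field_simp
      linear_combination h2
  rw [key]
  have := key σ N
  rw [add_comm σ N, Nat.choose_symm_add] at *
  rw [← this]
  refine Finset.prod_congr rfl fun i _ => ?_
  ring

/-- The polynomial-in-`e` part at `A = -r`. -/
noncomputable def upart (b r d e : ℕ) : ℚ :=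
  if r ≤ b then 0 else ∏ i ∈ range (r - b - 1), (((d : ℚ) - e + i + 1) / (i + 1))

lemma lam_eval_neg (b r d e : ℕ) (h : e + b < d + r) :
    (lam b d e).eval (-(r : ℚ)) = upart b r d e := by
  unfold lam upart
  split_ifs with h1 h2 h2
  · rw [eval_gpoly]
    refine Finset.prod_eq_zero (i := b - r) (Finset.mem_range.2 (by omega)) ?_
    rw [Nat.cast_sub h2]
    simp
  · rw [eval_gpoly]
    obtain ⟨σ, rfl⟩ : ∃ σ, r = b + σ + 1 := ⟨r - b - 1, by omega⟩
    obtain ⟨N, rfl⟩ : ∃ N, d = e + N := ⟨d - e, by omega⟩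
    rw [show b + σ + 1 - b - 1 = σ by omega, show e + N - e = N by omega]
    have := prod_swap N σ
    push_cast
    convert this using 3 <;> ring
  · omega
  · rw [Polynomial.eval_zero]
    symm
    refine Finset.prod_eq_zero (i := e - d - 1) (Finset.mem_range.2 (by omega)) ?_
    obtain ⟨x, rfl⟩ : ∃ x, e = d + x + 1 := ⟨e - d - 1, by omega⟩
    rw [show d + x + 1 - d - 1 = x by omega]
    push_cast
    rw [div_eq_zero_iff]; left; ring

noncomputable def vpart (b r d e : ℕ) : ℚ := (lam b d e).eval (-(r : ℚ)) - upart b r d e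

lemma lam_decomp (b r d e : ℕ) : ∃ w : Polynomial ℚ,
    lam b d e = Polynomial.C (upart b r d e) + Polynomial.C (vpart b r d e) +
      (Polynomial.X + Polynomial.C (r : ℚ)) * w := by
  have h : (Polynomial.X - Polynomial.C (-(r : ℚ))) ∣
      (lam b d e - Polynomial.C ((lam b d e).eval (-(r : ℚ)))) :=
    Polynomial.X_sub_C_dvd_sub_C_eval
  obtain ⟨w, hw⟩ := h
  refine ⟨w, ?_⟩
  rw [map_neg, sub_neg_eq_add] at hw
  rw [← hw, vpart, map_sub]
  ring

lemma PD_upart {n : ℕ} (M : Finset (Fin n)) (b r d : ℕ) (l : Fin n) :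
    PD M (r - b - 1 + 1) (fun e => Polynomial.C (upart b r d (e l))) := by
  unfold upart
  split_ifs with h
  · simp only [map_zero]; exact PD_zero _ _
  · simp only [map_prod]
    have := PD_prod M (range (r - b - 1)) (fun _ => 1)
      (fun i e => Polynomial.C (((d : ℚ) - (e l : ℕ) + i + 1) / (i + 1))) ?_
    · simpa using this
    · intro i _ j _ j' _
      simp only [PD]
      funext e
      simp only [Finsupp.add_apply, ← map_sub, Pi.zero_apply]
      rw [Polynomial.C_eq_zero]
      push_cast
      ring

lemma PD_const {n : ℕ} (M : Finset (Fin n)) (g : ℕ → Polynomial ℚ) (l : Fin n) (hl : l ∉ M) :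
    PD M 1 (fun e => g (e l)) := by
  intro i hi
  simp only [PD]
  funext e
  have : l ≠ i := fun h => hl (h ▸ hi)
  simp [this.symm]

noncomputable def Mor (m a b K : ℕ) : MvPolynomial (Fin (m + 1)) ℚ :=
  (∏ l : Fin m, (X 0 - X l.succ) ^ a * (X l.succ - X 0) ^ b) *
    ∏ j : Fin m, ∏ i ∈ univ.erase j, (X j.succ - X i.succ) ^ K

/-- Number of ordered pairs (with multiplicities) inside `M`. -/
def Scount (m p K : ℕ) (M : Finset (Fin (m + 1))) : ℕ :=
  (if 0 ∈ M then 2 * (#{l : Fin m | l.succ ∈ M} * p) else 0) +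
    #{l : Fin m | l.succ ∈ M} * (#{l : Fin m | l.succ ∈ M} - 1) * K

lemma Scount_eq (m p K : ℕ) (M : Finset (Fin (m + 1))) :
    (∑ l : Fin m, (p * (if l.succ ∈ M ∧ 0 ∈ M then 1 else 0) +
        p * (if 0 ∈ M ∧ l.succ ∈ M then 1 else 0))) +
      ∑ j : Fin m, ∑ i ∈ univ.erase j, K * (if i.succ ∈ M ∧ j.succ ∈ M then 1 else 0) =
      Scount m p K M := by
  unfold Scount
  congr 1
  · split_ifs with h
    · simp only [h, and_true, true_and, ← two_mul, ← Finset.mul_sum]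
      rw [Finset.sum_boole]
      simp only [Nat.cast_id]; ring
    · simp [h]
  · have h1 : ∀ j : Fin m, ∑ i ∈ univ.erase j, K * (if i.succ ∈ M ∧ j.succ ∈ M then 1 else 0) =
        if j.succ ∈ M then K * (#{l : Fin m | l.succ ∈ M} - 1) else 0 := by
      intro j
      split_ifs with h
      · simp only [h, and_true, ← Finset.mul_sum]
        rw [Finset.sum_boole, Nat.cast_id, Finset.filter_erase, Finset.card_erase_of_mem]
        simpa using h
      · simp [h]
    simp only [h1]
    rw [← Finset.sum_filter, Finset.sum_const, smul_eq_mul]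
    ring

lemma Kills_Mor (m p K : ℕ) (M : Finset (Fin (m + 1))) :
    Kills M (Mor m p p K) (Scount m p K M) := by
  rw [← Scount_eq]
  refine Kills_mul M (Kills_prod M _ _ _ fun l _ => ?_)
    (Kills_prod M _ _ _ fun j _ => Kills_prod M _ _ _ fun i _ => ?_)
  · exact Kills_mul M (Kills_pow M (Kills_X_sub M _ _) p) (Kills_pow M (Kills_X_sub M _ _) p)
  · exact Kills_pow M (Kills_X_sub M _ _) K

lemma LowDeg_Mor (m p K : ℕ) (M : Finset (Fin (m + 1))) :
    LowDeg M (Mor m p p K) (Scount m p K M) := by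
  rw [← Scount_eq]
  refine LowDeg_mul M (LowDeg_prod M _ _ _ fun l _ => ?_)
    (LowDeg_prod M _ _ _ fun j _ => LowDeg_prod M _ _ _ fun i _ => ?_)
  · exact LowDeg_mul M (LowDeg_pow M (LowDeg_X_sub M _ _) p) (LowDeg_pow M (LowDeg_X_sub M _ _) p)
  · exact LowDeg_pow M (LowDeg_X_sub M _ _) K

lemma hom_X_sub {n : ℕ} (i j : Fin n) (k : ℕ) :
    ((X i - X j : MvPolynomial (Fin n) ℚ) ^ k).IsHomogeneous k := by
  simpa using ((isHomogeneous_X ℚ i).sub (isHomogeneous_X ℚ j)).pow k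

lemma hom_Mor (m a b K : ℕ) :
    (Mor m a b K).IsHomogeneous (m * (a + b) + m * (m - 1) * K) := by
  have h1 : (∏ l : Fin m, (X 0 - X l.succ : MvPolynomial (Fin (m+1)) ℚ) ^ a *
      (X l.succ - X 0) ^ b).IsHomogeneous (∑ l : Fin m, (a + b)) :=
    IsHomogeneous.prod _ _ _ fun l _ => (hom_X_sub _ _ _).mul (hom_X_sub _ _ _)
  have h2 : (∏ j : Fin m, ∏ i ∈ univ.erase j,
      (X j.succ - X i.succ : MvPolynomial (Fin (m+1)) ℚ) ^ K).IsHomogeneous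
        (∑ j : Fin m, ∑ i ∈ univ.erase j, K) :=
    IsHomogeneous.prod _ _ _ fun l _ => IsHomogeneous.prod _ _ _ fun i _ => hom_X_sub _ _ _
  have := h1.mul h2
  simpa [Mor, mul_assoc, Finset.card_erase_of_mem] using this

def beta (p K i : ℕ) : ℕ := if i = 0 then 0 else p + (i - 1) * K

lemma beta_mono (p K : ℕ) : Monotone (beta p K) := by
  refine monotone_nat_of_le_succ fun i => ?_
  unfold beta
  cases i with
  | zero => simp
  | succ i => simp; exact Nat.mul_le_mul_right _ (by omega)

lemma num1a (p K q σ : ℕ) (hK : K = p ∨ K = p + 1) (h : σ + 1 ≤ p + q * K) :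
    (q + 2) * σ + 1 ≤ 2 * ((q + 1) * p) + (q + 1) * q * K := by
  rcases hK with rfl | rfl
  · nlinarith [Nat.mul_le_mul_left (q + 2) h]
  · nlinarith [Nat.mul_le_mul_left (q + 2) h]

lemma num1b (p K q σ : ℕ) (hK : K = p ∨ K = p + 1) (h : σ + 1 ≤ p + q * K) :
    (q + 2) * σ + 1 ≤ (q + 2) * (q + 1) * K := by
  rcases hK with rfl | rfl
  · nlinarith [Nat.mul_le_mul_left (q + 2) h]
  · nlinarith [Nat.mul_le_mul_left (q + 2) h]

lemma num2a (p K c w r : ℕ) (hK : K = p ∨ K = p + 1) (h : beta p K c < r) :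
    (w + c) * (p + p) + (w + c) * (w + c - 1) * K <
    c * (c - 1) * K + (w * (p + (w + c - 1) * K) + (w + c) * p + (w + 1) * r) := by
  unfold beta at h
  rcases Nat.eq_zero_or_pos c with rfl | hc
  · simp only [if_true] at h
    simp
    rcases w with _ | w
    · simpa using h
    · simp; nlinarith
  · obtain ⟨c, rfl⟩ : ∃ x, c = x + 1 := ⟨c - 1, by omega⟩
    simp at h
    rw [show w + (c + 1) - 1 = w + c by omega, show c + 1 - 1 = c by omega]
    rcases hK with rfl | rfl
    · nlinarith [Nat.mul_le_mul_left (w + 1) (Nat.succ_le_of_lt h)]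
    · nlinarith [Nat.mul_le_mul_left (w + 1) (Nat.succ_le_of_lt h)]

lemma num2b (p K c w r : ℕ) (h : beta p K (c + 1) < r) :
    (w + 1 + c) * (p + p) + (w + 1 + c) * (w + 1 + c - 1) * K <
    2 * (c * p) + c * (c - 1) * K + ((w + 1) * (p + (w + 1 + c - 1) * K) + (w + 1) * r) := by
  unfold beta at h
  simp at h
  rw [show w + 1 + c - 1 = w + c by omega]
  have h2 := Nat.mul_le_mul_left (w + 1) (Nat.succ_le_of_lt h)
  rcases c with _ | c
  · simp at h2 ⊢; nlinarith
  · rw [show c + 1 - 1 = c by omega]; nlinarith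

def Dexp (m p K : ℕ) : Fin (m + 1) → ℕ := Fin.cons (m * p) (fun _ => p + (m - 1) * K)

lemma card_succ_filter (m : ℕ) (M : Finset (Fin (m + 1))) :
    #M = (if 0 ∈ M then 1 else 0) + #{l : Fin m | l.succ ∈ M} := by
  have h1 : #M = ∑ l : Fin (m + 1), if l ∈ M then 1 else 0 := by simp
  rw [h1, Fin.sum_univ_succ]
  congr 1
  rw [Finset.sum_boole]; rfl

lemma sum_Dexp (m p K : ℕ) (R : Finset (Fin (m + 1))) :
    ∑ l ∈ R, Dexp m p K l = (if 0 ∈ R then m * p else 0) +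
      #{l : Fin m | l.succ ∈ R} * (p + (m - 1) * K) := by
  have h1 : ∑ l ∈ R, Dexp m p K l = ∑ l : Fin (m + 1), if l ∈ R then Dexp m p K l else 0 := by
    simp
  rw [h1, Fin.sum_univ_succ]
  congr 1
  rw [← Finset.sum_filter]
  simp [Dexp]

lemma low_vanish (m p K r : ℕ) (hK : K = p ∨ K = p + 1)
    (R : Finset (Fin (m + 1))) (hR : R.Nonempty) (hβ : beta p K (#Rᶜ) < r)
    (e : Fin (m + 1) →₀ ℕ) (he : e ∈ (Mor m p p K).support) :
    ∃ l ∈ R, e l < Dexp m p K l + r := by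
  by_contra! hcon
  have h1 := Finset.sum_le_sum hcon
  rw [Finset.sum_add_distrib, sum_Dexp, Finset.sum_const, smul_eq_mul] at h1
  have h2 := LowDeg_Mor m p K Rᶜ e he
  have h3 : ∑ l, e l = m * (p + p) + m * (m - 1) * K := by
    have := hom_Mor m p p K (mem_support_iff.1 he)
    rw [← this, Finsupp.weight_apply, Finsupp.sum_fintype] <;> simp
  have h4 := Finset.sum_add_sum_compl R e
  have hc := card_succ_filter m Rᶜ
  have hw := card_succ_filter m R
  have hm := Finset.card_add_card_compl R
  rw [Fintype.card_fin] at hm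
  have hRp := hR.card_pos
  unfold Scount at h2
  generalize hcs : #{l : Fin m | l.succ ∈ Rᶜ} = c at *
  generalize hws : #{l : Fin m | l.succ ∈ R} = w at *
  by_cases h0 : (0 : Fin (m + 1)) ∈ R
  · have h0' : (0 : Fin (m + 1)) ∉ Rᶜ := by simpa using h0
    simp only [h0, h0', if_true, if_false, zero_add] at *
    rw [hc] at hβ
    rw [hw] at h1 hm
    obtain rfl : m = w + c := by omega
    have := num2a p K c w r hK hβ
    have e1 : 1 + w = w + 1 := add_comm _ _
    rw [e1] at h1
    omega
  · have h0' : (0 : Fin (m + 1)) ∈ Rᶜ := by simpa using h0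
    simp only [h0, h0', if_true, if_false, zero_add] at *
    obtain ⟨w, rfl⟩ : ∃ x, w = x + 1 := ⟨w - 1, by omega⟩
    rw [hc, add_comm 1 c] at hβ
    rw [hw] at h1 hm
    obtain rfl : m = w + 1 + c := by omega
    have := num2b p K c w r hβ
    omega

lemma high_num (m p K σ : ℕ) (hK : K = p ∨ K = p + 1) (M : Finset (Fin (m + 1)))
    (h : σ + 1 ≤ beta p K (#M - 1)) : #M * σ + 1 ≤ Scount m p K M := by
  have hc := card_succ_filter m M
  unfold Scount
  unfold beta at h
  generalize hcs : #{l : Fin m | l.succ ∈ M} = q at *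
  by_cases h0 : (0 : Fin (m + 1)) ∈ M
  · simp only [h0, if_true] at *
    rw [hc] at h ⊢
    split_ifs at h with h2
    · omega
    · obtain ⟨q, rfl⟩ : ∃ x, q = x + 1 := ⟨q - 1, by omega⟩
      have := num1a p K q σ hK (by simpa using h)
      rw [show 1 + (q + 1) = q + 2 by omega, show q + 1 - 1 = q by omega]
      exact this
  · simp only [h0, if_false, zero_add] at *
    rw [hc] at h ⊢
    split_ifs at h with h2
    · omega
    · obtain ⟨q, rfl⟩ : ∃ x, q = x + 2 := ⟨q - 2, by omega⟩
      exact num1b p K q σ hK (by simpa using h)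

/-- number of exponents `i ≤ m` whose string of roots hits `-r`. -/
def mult (m p K b r : ℕ) : ℕ := #{i ∈ range (m + 1) | beta p K i < r ∧ r ≤ beta p K i + b}

lemma mult_le (m p K b r x t : ℕ) (h1 : x = 0 ∨ beta p K (x - 1) + b < r)
    (h2 : m + 1 ≤ x + t ∨ r ≤ beta p K (x + t)) : mult m p K b r ≤ t := by
  have hsub : {i ∈ range (m + 1) | beta p K i < r ∧ r ≤ beta p K i + b} ⊆ Finset.Ico x (x + t) := by
    intro i hi
    rw [Finset.mem_filter, Finset.mem_range] at hi
    rw [Finset.mem_Ico]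
    constructor
    · by_contra! hlt
      rcases h1 with h1 | h1
      · omega
      · have := beta_mono p K (show i ≤ x - 1 by omega)
        omega
    · by_contra! hlt
      rcases h2 with h2 | h2
      · omega
      · have := beta_mono p K hlt
        omega
  have := Finset.card_le_card hsub
  rw [Nat.card_Ico, Nat.add_sub_cancel_left] at this
  exact this

noncomputable def gsel (b r : ℕ) {n : ℕ} (d : Fin n → ℕ) (w : Fin n → ℕ → Polynomial ℚ)
    (c : Fin 3) (l : Fin n) (e : ℕ) : Polynomial ℚ :=
  if c = 0 then Polynomial.C (upart b r (d l) e)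
  else if c = 1 then Polynomial.C (vpart b r (d l) e) else w l e

lemma term_vanish (m p K b r : ℕ) (hK : K = p ∨ K = p + 1)
    (w : Fin (m + 1) → ℕ → Polynomial ℚ) (τ : Fin (m + 1) → Fin 3)
    (ht : #{l | τ l = 2} < mult m p K b r) :
    pairing (fun e => ∏ l, gsel b r (fun l => Dexp m p K l + b) w (τ l) l (e l))
      (Mor m p p K) = 0 := by
  by_cases hA : #{l | τ l = 0} = 0 ∨ beta p K (#{l | τ l = 0} - 1) + b < r
  · have hB : ¬ (m + 1 ≤ #{l | τ l = 0} + #{l | τ l = 2} ∨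
        r ≤ beta p K (#{l | τ l = 0} + #{l | τ l = 2})) := by
      intro hB
      have := mult_le m p K b r _ _ hA hB
      omega
    push Not at hB
    have hcompl : #({l | τ l = 1} : Finset (Fin (m + 1)))ᶜ =
        #{l | τ l = 0} + #{l | τ l = 2} := by
      rw [← Finset.card_union_of_disjoint]
      · congr 1
        ext l
        simp only [Finset.mem_compl, Finset.mem_filter, Finset.mem_univ, true_and,
          Finset.mem_union]
        generalize τ l = c
        revert c; decide
      · rw [Finset.disjoint_filter]
        intro l _ h; rw [h]; decide
    have hne : ({l | τ l = 1} : Finset (Fin (m + 1))).Nonempty := by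
      rw [← Finset.card_pos]
      have := Finset.card_add_card_compl ({l | τ l = 1} : Finset (Fin (m + 1)))
      rw [Fintype.card_fin] at this
      omega
    rw [pairing_eq_sum]
    refine Finset.sum_eq_zero fun e he => ?_
    obtain ⟨l, hl, hlt⟩ := low_vanish m p K r hK _ hne (by rw [hcompl]; exact hB.2) e he
    rw [Finset.mem_filter] at hl
    rw [Finset.prod_eq_zero (Finset.mem_univ l), smul_zero]
    rw [hl.2]
    have : vpart b r (Dexp m p K l + b) (e l) = 0 := by
      unfold vpart
      rw [lam_eval_neg, sub_self]
      omega
    simp [gsel, this]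
  · push Not at hA
    by_cases hrb : r ≤ b
    · obtain ⟨l, hl⟩ := Finset.card_pos.1 (Nat.pos_of_ne_zero hA.1)
      rw [Finset.mem_filter] at hl
      rw [pairing_eq_sum]
      refine Finset.sum_eq_zero fun e he => ?_
      rw [Finset.prod_eq_zero (Finset.mem_univ l), smul_zero]
      rw [hl.2]
      simp [gsel, upart, hrb]
    · refine Kills_apply (D := #{l | τ l = 0} * (r - b - 1) + 1) {l | τ l = 0} (Kills_Mor m p K _) ?_ _ ?_
      · exact high_num m p K _ hK _ (by omega)
      · have := PD_prod ({l | τ l = 0} : Finset (Fin (m + 1))) univ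
          (fun l => if τ l = 0 then r - b - 1 else 0)
          (fun l e => gsel b r (fun l => Dexp m p K l + b) w (τ l) l (e l)) ?_
        · rw [← Finset.sum_filter, Finset.sum_const, smul_eq_mul] at this
          exact this
        · intro l _
          by_cases h0 : τ l = 0
          · simp only [h0, if_true, gsel]
            exact PD_upart _ _ _ _ _
          · simp only [h0, if_false]
            exact PD_const _ _ l (by simpa using h0)

noncomputable def Lam (m p K b : ℕ) : Polynomial ℚ :=
  pairing (fun e => ∏ l, lam b (Dexp m p K l + b) (e l)) (Mor m p p K)

lemma pairing_mul_left {n : ℕ} (c : Polynomial ℚ) (f : (Fin n →₀ ℕ) → Polynomial ℚ) (G) :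
    pairing (fun e => c * f e) G = c * pairing f G := by
  rw [pairing_eq_sum, pairing_eq_sum, Finset.mul_sum]
  exact Finset.sum_congr rfl fun e _ => (mul_smul_comm _ _ _).symm

lemma pairing_sum {n : ℕ} {ι : Type*} (S : Finset ι) (f : ι → (Fin n →₀ ℕ) → Polynomial ℚ) (G) :
    pairing (fun e => ∑ s ∈ S, f s e) G = ∑ s ∈ S, pairing (f s) G := by
  simp only [pairing_eq_sum, Finset.smul_sum]
  rw [Finset.sum_comm]

lemma Lam_dvd (m p K b r : ℕ) (hK : K = p ∨ K = p + 1) :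
    (Polynomial.X + Polynomial.C (r : ℚ)) ^ mult m p K b r ∣ Lam m p K b := by
  choose w hw using fun (l : Fin (m + 1)) (e : ℕ) => lam_decomp b r (Dexp m p K l + b) e
  set ε : Polynomial ℚ := Polynomial.X + Polynomial.C (r : ℚ) with hε
  have h1 : ∀ e : Fin (m + 1) →₀ ℕ, ∏ l, lam b (Dexp m p K l + b) (e l) =
      ∑ τ : Fin (m + 1) → Fin 3, ε ^ #{l | τ l = 2} *
        ∏ l, gsel b r (fun l => Dexp m p K l + b) w (τ l) l (e l) := by
    intro e
    have h2 : ∀ l, lam b (Dexp m p K l + b) (e l) = ∑ c : Fin 3,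
        (if c = 2 then ε else 1) * gsel b r (fun l => Dexp m p K l + b) w c l (e l) := by
      intro l
      rw [hw, Fin.sum_univ_three]
      simp [gsel]
    simp only [h2]
    rw [Finset.prod_univ_sum, Fintype.piFinset_univ]
    refine Finset.sum_congr rfl fun τ _ => ?_
    rw [Finset.prod_mul_distrib]
    congr 1
    rw [← Finset.prod_filter, Finset.prod_const]
  unfold Lam
  simp only [h1]
  rw [pairing_sum]
  refine Finset.dvd_sum fun τ _ => ?_
  rw [pairing_mul_left]
  by_cases ht : #{l | τ l = 2} < mult m p K b r
  · rw [term_vanish m p K b r hK w τ ht, mul_zero]; exact dvd_zero _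
  · exact Dvd.dvd.mul_right (pow_dvd_pow _ (by omega)) _

lemma sum_Dexp_univ (m p K : ℕ) : ∑ l, Dexp m p K l = m * (p + p) + m * (m - 1) * K := by
  rw [sum_Dexp]
  simp
  ring

lemma supp_sum (m p K : ℕ) (e : Fin (m + 1) →₀ ℕ) (he : e ∈ (Mor m p p K).support) :
    ∑ l, e l = ∑ l, Dexp m p K l := by
  rw [sum_Dexp_univ]
  have := hom_Mor m p p K (mem_support_iff.1 he)
  rw [← this, Finsupp.weight_apply, Finsupp.sum_fintype] <;> simp

lemma natDegree_Lam (m p K b : ℕ) : (Lam m p K b).natDegree ≤ (m + 1) * b := by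
  unfold Lam
  rw [pairing_eq_sum]
  refine Polynomial.natDegree_sum_le_of_forall_le _ _ fun e he => ?_
  refine (Polynomial.natDegree_smul_le _ _).trans ?_
  by_cases h : ∀ l, e l ≤ Dexp m p K l + b
  · refine (Polynomial.natDegree_prod_le _ _).trans ?_
    have h1 : ∀ l ∈ univ, (lam b (Dexp m p K l + b) (e l)).natDegree ≤ Dexp m p K l + b - e l := by
      intro l _
      rw [lam, if_pos (h l)]
      exact natDegree_gpoly _ _
    refine (Finset.sum_le_sum h1).trans ?_
    have h2 := supp_sum m p K e he
    have h3 : ∑ l, (Dexp m p K l + b - e l) + ∑ l, e l = ∑ l, (Dexp m p K l + b) := by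
      rw [← Finset.sum_add_distrib]
      exact Finset.sum_congr rfl fun l _ => Nat.sub_add_cancel (h l)
    rw [Finset.sum_add_distrib] at h3
    simp at h3
    omega
  · push Not at h
    obtain ⟨l, hl⟩ := h
    rw [Finset.prod_eq_zero (Finset.mem_univ l)]
    · simp
    · rw [lam, if_neg (by omega)]

noncomputable def rootSet (m p K b : ℕ) : Multiset ℚ :=
  (range (m + 1) ×ˢ range b).val.map fun x => -((beta p K x.1 + x.2 + 1 : ℕ) : ℚ)

lemma count_rootSet (m p K b r : ℕ) :
    (rootSet m p K b).count (-(r : ℚ)) ≤ mult m p K b r := by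
  unfold rootSet mult
  rw [Multiset.count_map]
  change #(filter _ _) ≤ _
  refine Finset.card_le_card_of_injOn Prod.fst ?_ ?_
  · intro x hx
    simp only [Finset.coe_filter, Finset.mem_product, Set.mem_ofPred_eq, neg_inj, Nat.cast_inj,
      Finset.mem_range] at hx ⊢
    omega
  · intro x hx y hy hxy
    simp only [Finset.coe_filter, Finset.mem_product, Set.mem_ofPred_eq, neg_inj, Nat.cast_inj,
      Finset.mem_range] at hx hy
    rw [hxy] at hx
    exact Prod.ext hxy (by omega)

lemma Lam_form (m p K b : ℕ) (hK : K = p ∨ K = p + 1) : ∃ c : ℚ,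
    Lam m p K b = Polynomial.C c * ((rootSet m p K b).map fun a => Polynomial.X - Polynomial.C a).prod := by
  by_cases h0 : Lam m p K b = 0
  · exact ⟨0, by simp [h0]⟩
  have hd : ((rootSet m p K b).map fun a => Polynomial.X - Polynomial.C a).prod ∣ Lam m p K b := by
    rw [Multiset.prod_X_sub_C_dvd_iff_le_roots h0, Multiset.le_iff_count]
    intro x
    by_cases hx : x ∈ rootSet m p K b
    · obtain ⟨y, _, rfl⟩ := Multiset.mem_map.1 hx
      refine (count_rootSet m p K b _).trans ?_
      rw [Polynomial.count_roots, Polynomial.le_rootMultiplicity_iff h0, map_neg, sub_neg_eq_add]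
      exact Lam_dvd m p K b _ hK
    · rw [Multiset.count_eq_zero_of_notMem hx]; exact Nat.zero_le _
  obtain ⟨q, hq⟩ := hd
  have hmonic : ((rootSet m p K b).map fun a => Polynomial.X - Polynomial.C a).prod.Monic :=
    Polynomial.monic_multiset_prod_of_monic _ _ fun a _ => Polynomial.monic_X_sub_C a
  have hq0 : q ≠ 0 := by rintro rfl; exact h0 (by rw [hq, mul_zero])
  have hdeg := natDegree_Lam m p K b
  rw [hq, hmonic.natDegree_mul' hq0, Polynomial.natDegree_multiset_prod_X_sub_C_eq_card] at hdeg
  have hcard : (rootSet m p K b).card = (m + 1) * b := by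
    simp [rootSet]; ring
  rw [hcard] at hdeg
  have hqc := Polynomial.eq_C_of_natDegree_eq_zero (show q.natDegree = 0 by omega)
  refine ⟨q.coeff 0, ?_⟩
  rw [← hqc, hq, mul_comm]

lemma Lam_eval (m p K b : ℕ) (hK : K = p ∨ K = p + 1) (a : ℚ) :
    (Lam m p K b).eval a * ∏ i ∈ range (m + 1), ∏ t ∈ range b, ((beta p K i : ℚ) + t + 1) =
    (Lam m p K b).eval 0 * ∏ i ∈ range (m + 1), ∏ t ∈ range b, (a + (beta p K i : ℚ) + t + 1) := by
  obtain ⟨c, hc⟩ := Lam_form m p K b hK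
  have h : ∀ a : ℚ, (Lam m p K b).eval a =
      c * ∏ i ∈ range (m + 1), ∏ t ∈ range b, (a + (beta p K i : ℚ) + t + 1) := by
    intro a
    rw [hc, Polynomial.eval_mul, Polynomial.eval_C, ← Finset.prod_product']
    congr 1
    rw [rootSet, Multiset.map_map]
    change Polynomial.eval a (∏ x ∈ range (m + 1) ×ˢ range b, _) = _
    rw [Polynomial.eval_prod]
    refine Finset.prod_congr rfl fun x _ => ?_
    simp
    ring
  rw [h a, h 0]
  simp only [zero_add]
  ring

lemma X_sub_pow (n N : ℕ) (l : Fin n) :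
    (X 0 - X l.succ : MvPolynomial (Fin (n + 1)) ℚ) ^ N = ∑ j ∈ range (N + 1),
      C ((-1) ^ j * (N.choose j : ℚ)) *
        monomial (Finsupp.single l.succ j + Finsupp.single 0 (N - j)) 1 := by
  rw [sub_eq_neg_add, add_pow]
  refine Finset.sum_congr rfl fun j _ => ?_
  have h : (monomial (Finsupp.single l.succ j + Finsupp.single 0 (N - j)) 1 :
      MvPolynomial (Fin (n + 1)) ℚ) = X l.succ ^ j * X 0 ^ (N - j) := by
    rw [X_pow_eq_monomial, X_pow_eq_monomial, monomial_mul, one_mul]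
  rw [h, neg_pow]
  simp only [map_mul, map_pow, map_neg, map_one, map_natCast]
  ring

lemma sum_lam (b d e a : ℕ) :
    ∑ j ∈ range (a + b + 1), (if j + e = d then (-1) ^ j * ((a + b).choose j : ℚ) else 0) =
      (lam b d e).eval (a : ℚ) := by
  unfold lam
  split_ifs with h
  · rw [eval_gpoly_nat]
    by_cases h2 : d - e < a + b + 1
    · rw [Finset.sum_eq_single_of_mem (d - e) (Finset.mem_range.2 h2)]
      · rw [if_pos (by omega)]
      · intro j _ hj
        rw [if_neg (by omega)]
    · rw [Nat.choose_eq_zero_of_lt (by omega), Finset.sum_eq_zero]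
      · simp
      · intro j hj
        rw [Finset.mem_range] at hj
        rw [if_neg (by omega)]
  · rw [Polynomial.eval_zero]
    exact Finset.sum_eq_zero fun j _ => if_neg (by omega)

lemma coeff_monomial_case (n a b : ℕ) (d : Fin n → ℕ) (e : Fin n →₀ ℕ)
    (h : ∑ l, e l + n * b = ∑ l, d l) (c : ℚ) :
    coeff (Finsupp.equivFunOnFinite.symm (Fin.cons (n * a) d))
      ((∏ l : Fin n, (X 0 - X l.succ : MvPolynomial (Fin (n + 1)) ℚ) ^ a * (X l.succ - X 0) ^ b) *
        rename Fin.succ (monomial e c)) =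
      (-1) ^ (n * b) * (c * ∏ l, (lam b (d l) (e l)).eval (a : ℚ)) := by
  have h1 : (∏ l : Fin n, (X 0 - X l.succ : MvPolynomial (Fin (n + 1)) ℚ) ^ a *
      (X l.succ - X 0) ^ b) = C ((-1) ^ (n * b)) * ∏ l : Fin n, (X 0 - X l.succ) ^ (a + b) := by
    have : ∀ l : Fin n, (X 0 - X l.succ : MvPolynomial (Fin (n + 1)) ℚ) ^ a *
      (X l.succ - X 0) ^ b = (-1) ^ b * (X 0 - X l.succ) ^ (a + b) := by
      intro l
      rw [← neg_sub (X 0) (X l.succ), neg_pow, pow_add]; ring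
    rw [Finset.prod_congr rfl fun l _ => this l, Finset.prod_mul_distrib]
    simp [pow_mul']
  have h2 : ∏ l : Fin n, (X 0 - X l.succ : MvPolynomial (Fin (n + 1)) ℚ) ^ (a + b) =
      ∑ p ∈ Fintype.piFinset fun _ : Fin n => range (a + b + 1),
        monomial (∑ l, (Finsupp.single l.succ (p l) + Finsupp.single 0 (a + b - p l)))
          (∏ l, (-1) ^ (p l) * ((a + b).choose (p l) : ℚ)) := by
    simp only [X_sub_pow]
    rw [Finset.prod_univ_sum]
    refine Finset.sum_congr rfl fun p _ => ?_
    rw [Finset.prod_mul_distrib, monomial_sum_index, map_prod]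
  rw [h1, h2, rename_monomial, mul_assoc, coeff_C_mul, Finset.sum_mul, coeff_sum]
  congr 1
  have h3 : ∏ l, (lam b (d l) (e l)).eval (a : ℚ) =
      ∑ p ∈ Fintype.piFinset fun _ : Fin n => range (a + b + 1),
        ∏ l, (if p l + e l = d l then (-1) ^ (p l) * ((a + b).choose (p l) : ℚ) else 0) := by
    simp only [← sum_lam]
    exact Finset.prod_univ_sum _ _
  rw [h3, Finset.mul_sum]
  refine Finset.sum_congr rfl fun p hp => ?_
  rw [monomial_mul, coeff_monomial]
  have hv0 : (∑ l, (Finsupp.single l.succ (p l) + Finsupp.single 0 (a + b - p l)) +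
      Finsupp.mapDomain Fin.succ e : Fin (n + 1) →₀ ℕ) 0 = ∑ l, (a + b - p l) := by
    have : (Finsupp.mapDomain Fin.succ e : Fin (n + 1) →₀ ℕ) 0 = 0 := by
      apply Finsupp.mapDomain_of_notMem_range
      rintro ⟨x, hx⟩
      exact Fin.succ_ne_zero x hx
    simp [this]
  have hvs : ∀ i : Fin n, (∑ l, (Finsupp.single l.succ (p l) + Finsupp.single 0 (a + b - p l)) +
      Finsupp.mapDomain Fin.succ e : Fin (n + 1) →₀ ℕ) i.succ = p i + e i := by
    intro i
    have : (Finsupp.mapDomain Fin.succ e : Fin (n + 1) →₀ ℕ) i.succ = e i :=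
      Finsupp.mapDomain_apply (Fin.succ_injective n) e i
    simp [this, Finsupp.single_apply]
  by_cases hall : ∀ l, p l + e l = d l
  · rw [if_pos, Finset.prod_congr rfl fun l _ => if_pos (hall l), mul_comm]
    ext i
    refine Fin.cases ?_ (fun i => ?_) i
    · rw [hv0]
      simp only [Finsupp.equivFunOnFinite_symm_apply_apply, Fin.cons_zero]
      have g1 : ∑ l, (a + b - p l) + ∑ l, p l = ∑ l : Fin n, (a + b) := by
        rw [← Finset.sum_add_distrib]
        refine Finset.sum_congr rfl fun l _ => Nat.sub_add_cancel ?_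
        have := Fintype.mem_piFinset.1 hp l
        rw [Finset.mem_range] at this
        omega
      have g2 : ∑ l, p l + ∑ l, e l = ∑ l, d l := by
        rw [← Finset.sum_add_distrib]
        exact Finset.sum_congr rfl fun l _ => hall l
      rw [Finset.sum_const, Finset.card_univ, Fintype.card_fin, smul_eq_mul, mul_add] at g1
      omega
    · rw [hvs]
      simp only [Finsupp.equivFunOnFinite_symm_apply_apply, Fin.cons_succ]
      exact hall i
  · rw [if_neg]
    · push Not at hall
      obtain ⟨l, hl⟩ := hall
      rw [Finset.prod_eq_zero (Finset.mem_univ l) (if_neg hl), mul_zero]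
    · intro heq
      apply hall
      intro l
      rw [← hvs l, heq]
      simp

lemma coeff_main (m a b p K : ℕ) :
    coeff (Finsupp.equivFunOnFinite.symm
        (Fin.cons ((m + 1) * a) (fun l => Dexp m p K l + b)))
      ((∏ l : Fin (m + 1), (X 0 - X l.succ : MvPolynomial (Fin (m + 1 + 1)) ℚ) ^ a *
        (X l.succ - X 0) ^ b) * rename Fin.succ (Mor m p p K)) =
      (-1) ^ ((m + 1) * b) * (Lam m p K b).eval (a : ℚ) := by
  conv_lhs => rw [(Mor m p p K).as_sum, map_sum, Finset.mul_sum, coeff_sum]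
  rw [Lam, pairing_eq_sum, Polynomial.eval_finsetSum, Finset.mul_sum]
  refine Finset.sum_congr rfl fun e he => ?_
  rw [coeff_monomial_case, Polynomial.eval_smul, smul_eq_mul, Polynomial.eval_prod]
  rw [supp_sum m p K e he, Finset.sum_add_distrib]
  simp

lemma Lam_zero (m p K b : ℕ) : (-1) ^ ((m + 1) * b) * (Lam m p K b).eval 0 =
    coeff (Finsupp.equivFunOnFinite.symm (Dexp m p K)) (Mor m p p K) := by
  have hz : ∀ d e : ℕ, (lam b d e).eval (0 : ℚ) =
      if e ≤ d then (-1) ^ (d - e) * (b.choose (d - e) : ℚ) else 0 := by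
    intro d e
    unfold lam
    split_ifs
    · have := eval_gpoly_nat b (d - e) 0
      simpa using this
    · simp
  rw [Lam, pairing_eq_sum, Polynomial.eval_finsetSum]
  simp only [Polynomial.eval_smul, smul_eq_mul, Polynomial.eval_prod]
  have h1 : ∀ e ∈ (Mor m p p K).support, e ≠ Finsupp.equivFunOnFinite.symm (Dexp m p K) →
      coeff e (Mor m p p K) * ∏ l, (lam b (Dexp m p K l + b) (e l)).eval (0 : ℚ) = 0 := by
    intro e he hne
    have hs := supp_sum m p K e he
    have : ∃ l, e l < Dexp m p K l := by
      by_contra! hc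
      apply hne
      ext l
      have := (Finset.sum_eq_sum_iff_of_le fun l _ => hc l).1 hs.symm l (Finset.mem_univ l)
      simpa using this.symm
    obtain ⟨l, hl⟩ := this
    rw [Finset.prod_eq_zero (Finset.mem_univ l), mul_zero]
    rw [hz, if_pos (by omega), Nat.choose_eq_zero_of_lt (by omega)]
    simp
  by_cases hmem : Finsupp.equivFunOnFinite.symm (Dexp m p K) ∈ (Mor m p p K).support
  · rw [Finset.sum_eq_single_of_mem _ hmem h1]
    have h2 : ∀ l, (lam b (Dexp m p K l + b)
        ((Finsupp.equivFunOnFinite.symm (Dexp m p K)) l)).eval (0 : ℚ) = (-1) ^ b := by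
      intro l
      rw [hz]
      simp
    simp only [h2]
    rw [Finset.prod_const, Finset.card_univ, Fintype.card_fin, ← pow_mul, mul_comm b, mul_left_comm,
      ← mul_pow]
    simp
  · rw [notMem_support_iff.1 hmem, Finset.sum_eq_zero, mul_zero]
    intro e he
    exact h1 e he fun h => hmem (h ▸ he)

lemma fact_prod (x b : ℕ) :
    ∏ t ∈ range b, ((x : ℚ) + t + 1) = ((x + b).factorial : ℚ) / x.factorial := by
  have hx : (x.factorial : ℚ) ≠ 0 := by positivity
  rw [eq_div_iff hx]
  induction b with
  | zero => simp
  | succ b ih =>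
    rw [Finset.prod_range_succ, mul_right_comm, ih, ← add_assoc, Nat.factorial_succ]
    push_cast; ring

noncomputable def mCT (n a b K : ℕ) : ℚ :=
  coeff (Finsupp.equivFunOnFinite.symm (Fin.cons (n * a) (fun _ : Fin n => b + (n - 1) * K)))
    (Mor n a b K)

noncomputable def Afac (a b x : ℕ) : ℚ :=
  ((a + b + x).factorial * x.factorial : ℚ) / ((a + x).factorial * (b + x).factorial)

lemma general_step (m a b p K : ℕ) (hK : K = p ∨ K = p + 1) :
    coeff (Finsupp.equivFunOnFinite.symm
        (Fin.cons ((m + 1) * a) (fun l => Dexp m p K l + b)))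
      ((∏ l : Fin (m + 1), (X 0 - X l.succ : MvPolynomial (Fin (m + 1 + 1)) ℚ) ^ a *
        (X l.succ - X 0) ^ b) * rename Fin.succ (Mor m p p K)) =
      mCT m p p K * ∏ i ∈ range (m + 1), Afac a b (beta p K i) := by
  have h0 : mCT m p p K = coeff (Finsupp.equivFunOnFinite.symm (Dexp m p K)) (Mor m p p K) := rfl
  rw [coeff_main, h0, ← Lam_zero m p K b, mul_assoc]
  congr 1
  have h := Lam_eval m p K b hK a
  have e1 : ∀ i ∈ range (m + 1), ∏ t ∈ range b, ((a : ℚ) + (beta p K i : ℚ) + t + 1) =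
      Afac a b (beta p K i) * ∏ t ∈ range b, ((beta p K i : ℚ) + t + 1) := by
    intro i _
    have := fact_prod (a + beta p K i) b
    push_cast at this
    rw [this, fact_prod, Afac]
    generalize beta p K i = x
    rw [show a + x + b = a + b + x by omega, show x + b = b + x by omega]
    have h1 : (x.factorial : ℚ) ≠ 0 := by positivity
    have h2 : ((a + x).factorial : ℚ) ≠ 0 := by positivity
    have h3 : ((b + x).factorial : ℚ) ≠ 0 := by positivity
    field_simp
  rw [Finset.prod_congr rfl e1, Finset.prod_mul_distrib, ← mul_assoc] at h
  refine mul_right_cancel₀ ?_ h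
  exact Finset.prod_ne_zero_iff.2 fun i _ => Finset.prod_ne_zero_iff.2 fun t _ => by positivity

lemma prod_erase_succ {R : Type*} [CommRing R] (m K : ℕ) (Y : Fin (m + 1) → R) :
    ∏ j : Fin (m + 1), ∏ i ∈ univ.erase j, (Y j - Y i) ^ K =
      (∏ l : Fin m, (Y 0 - Y l.succ) ^ K * (Y l.succ - Y 0) ^ K) *
        ∏ j : Fin m, ∏ i ∈ univ.erase j, (Y j.succ - Y i.succ) ^ K := by
  have h : ∀ (n : ℕ) (j : Fin n) (g : Fin n → R), ∏ i ∈ univ.erase j, g i =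
      ∏ i, if i ≠ j then g i else 1 := by
    intro n j g
    rw [← Finset.prod_filter, Finset.filter_ne']
  simp only [h]
  rw [Fin.prod_univ_succ, Fin.prod_univ_succ]
  simp only [Fin.prod_univ_succ (n := m), Finset.prod_mul_distrib]
  simp [Fin.succ_ne_zero, (Fin.succ_ne_zero _).symm, Fin.succ_inj]
  ring

lemma rename_Mor (m a b K : ℕ) : rename Fin.succ (Mor m a b K) =
    ((∏ l : Fin m, (X (Fin.succ 0) - X l.succ.succ : MvPolynomial (Fin (m + 1 + 1)) ℚ) ^ a *
      (X l.succ.succ - X (Fin.succ 0)) ^ b) *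
    ∏ j : Fin m, ∏ i ∈ univ.erase j, (X j.succ.succ - X i.succ.succ) ^ K) := by
  simp only [Mor, map_mul, map_prod, map_pow, map_sub, rename_X]

lemma beta_self (K i : ℕ) : beta K K i = i * K := by
  unfold beta
  cases i with
  | zero => simp
  | succ i => simp; ring

lemma Dexp_self (m K : ℕ) (l : Fin (m + 1)) : Dexp m K K l = m * K := by
  unfold Dexp
  refine Fin.cases ?_ (fun i => ?_) l
  · simp
  · simp only [Fin.cons_succ]
    have := i.pos
    obtain ⟨x, rfl⟩ : ∃ x, m = x + 1 := ⟨m - 1, by omega⟩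
    simp; ring

lemma mCT_succ (m a b K : ℕ) :
    mCT (m + 1) a b K = mCT m K K K * ∏ i ∈ range (m + 1), Afac a b (i * K) := by
  have h := general_step m a b K K (Or.inl rfl)
  simp only [beta_self, Dexp_self] at h
  rw [← h, mCT, Mor, rename_Mor, ← prod_erase_succ m K (fun i : Fin (m + 1) => X i.succ)]
  simp only [Nat.add_sub_cancel, add_comm b]

lemma morris (n a b K : ℕ) : mCT n a b K = ∏ i ∈ range n,
    (Afac a b (i * K) * (((i + 1) * K).factorial : ℚ) / ((i * K).factorial * K.factorial)) := by
  induction n generalizing a b with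
  | zero =>
    simp only [mCT, Mor, Finset.univ_eq_empty, Finset.prod_empty, mul_one, Finset.range_zero]
    rw [coeff_one, if_pos]
    ext i
    refine Fin.cases ?_ (fun i => i.elim0) i
    simp
  | succ m ih =>
    rw [mCT_succ, ih, Finset.prod_range_succ', Finset.prod_range_succ', ← mul_assoc,
      ← Finset.prod_mul_distrib]
    congr 1
    · refine Finset.prod_congr rfl fun i _ => ?_
      unfold Afac
      rw [show K + K + i * K = (i + 1 + 1) * K by ring, show K + i * K = (i + 1) * K by ring]
      have h1 : (((i + 1) * K).factorial : ℚ) ≠ 0 := by positivity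
      have h2 : ((i * K).factorial : ℚ) ≠ 0 := by positivity
      have h3 : (K.factorial : ℚ) ≠ 0 := by positivity
      field_simp
    · have h3 : (K.factorial : ℚ) ≠ 0 := by positivity
      simp
      field_simp

noncomputable def CTgen (N m a b k : ℕ) : ℚ :=
  MvPolynomial.coeff
    (Finsupp.equivFunOnFinite.symm
      (Fin.cons (N * a)
        (fun l : Fin N =>
          b + (N - 1) * k + (if 1 ≤ (l : ℕ) then m - 1 else 0))))
    ((∏ j ∈ Finset.univ.filter (fun l : Fin N => 1 ≤ (l : ℕ)),
        ∏ i ∈ (Finset.univ.filter (fun l : Fin N => 1 ≤ (l : ℕ))).erase j,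
          (X j.succ - X i.succ : MvPolynomial (Fin (N + 1)) ℚ)) *
      (∏ l : Fin N,
        (X (0 : Fin (N + 1)) - X l.succ : MvPolynomial (Fin (N + 1)) ℚ) ^ a *
          (X l.succ - X (0 : Fin (N + 1))) ^ b) *
      ∏ j : Fin N, ∏ i ∈ Finset.univ.erase j,
        (X j.succ - X i.succ : MvPolynomial (Fin (N + 1)) ℚ) ^ k)

lemma forresterCT_eq (m a b k : ℕ) : forresterCT 1 m a b k = CTgen (m + 1) m a b k := by
  have h : forresterCT 1 m a b k = CTgen (1 + m) m a b k := rfl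
  rw [h, add_comm 1 m]

lemma filter_prod {R : Type*} [CommRing R] (m : ℕ) (Y : Fin (m + 1) → R) :
    (∏ j ∈ Finset.univ.filter (fun l : Fin (m + 1) => 1 ≤ (l : ℕ)),
        ∏ i ∈ (Finset.univ.filter (fun l : Fin (m + 1) => 1 ≤ (l : ℕ))).erase j, (Y j - Y i)) =
      ∏ j : Fin m, ∏ i ∈ univ.erase j, (Y j.succ - Y i.succ) := by
  have hf : (Finset.univ.filter (fun l : Fin (m + 1) => 1 ≤ (l : ℕ))) =
      Finset.univ.map (Fin.succEmb m) := by
    ext l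
    refine Fin.cases ?_ (fun i => ?_) l
    · simp
    · simp
  rw [hf, Finset.prod_map]
  refine Finset.prod_congr rfl fun j _ => ?_
  rw [← Finset.map_erase, Finset.prod_map]
  rfl

lemma CTgen_eq (m a b k : ℕ) : CTgen (m + 1) m a b k =
    mCT m k k (k + 1) * ∏ i ∈ range (m + 1), Afac a b (beta k (k + 1) i) := by
  rw [← general_step m a b k (k + 1) (Or.inr rfl), CTgen, rename_Mor,
    filter_prod m (fun i : Fin (m + 1) => (X i.succ : MvPolynomial (Fin (m + 1 + 1)) ℚ)),
    prod_erase_succ m k (fun i : Fin (m + 1) => (X i.succ : MvPolynomial (Fin (m + 1 + 1)) ℚ))]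
  have hexp : (fun l : Fin (m + 1) =>
      b + (m + 1 - 1) * k + (if 1 ≤ (l : ℕ) then m - 1 else 0)) =
      fun l => Dexp m k (k + 1) l + b := by
    funext l
    unfold Dexp
    refine Fin.cases ?_ (fun i => ?_) l
    · simp; ring
    · have := i.pos
      obtain ⟨x, rfl⟩ : ∃ x, m = x + 1 := ⟨m - 1, by omega⟩
      simp; ring
  rw [hexp]
  congr 1
  simp only [pow_succ (n := k), Finset.prod_mul_distrib]
  ring

/-- **Forrester's conjecture in the case `n₀ = 1`, `n₁ = n - 1`** (Corollary 5.3,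
second case): for `n ≥ 1`,
`CT_x ∏_{2 ≤ i ≠ j ≤ n}(1-x_i/x_j) H(x_0,…,x_n;a,b,k)
  = M_1(a,b,k) ∏_{j=0}^{n-2} (j+1)((k+1)j+a+b+k)!(kj+k+j+k)! /
      (k!((k+1)j+a+k)!((k+1)j+b+k)!)`. -/
theorem forrester_n1_eq_n_sub_one (n a b k : ℕ) (hn : 1 ≤ n) :
    forresterCT 1 (n - 1) a b k = forresterRHS 1 (n - 1) a b k := by
  obtain ⟨m, rfl⟩ : ∃ m, n = m + 1 := ⟨n - 1, by omega⟩
  rw [Nat.add_sub_cancel, forresterCT_eq, CTgen_eq, morris, forresterRHS,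
    Finset.prod_range_succ', ← mul_assoc, ← Finset.prod_mul_distrib, mul_comm]
  congr 1
  · have h3 : (k.factorial : ℚ) ≠ 0 := by positivity
    simp [Afac, beta]
    field_simp
  · refine Finset.prod_congr rfl fun j _ => ?_
    simp only [Afac, beta, Nat.succ_ne_zero, if_false, Nat.add_sub_cancel]
    rw [show k * j + k + j + k * 1 = k + k + j * (k + 1) by ring,
      show (k + 1) * j + a + b + k * 1 = a + b + (k + j * (k + 1)) by ring,
      show (k + 1) * j + a + k * 1 = a + (k + j * (k + 1)) by ring,
      show (k + 1) * j + b + k * 1 = b + (k + j * (k + 1)) by ring,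
      show (j + 1) * (k + 1) = k + j * (k + 1) + 1 by ring,
      Nat.factorial_succ, Nat.factorial_succ k]
    have h1 : ((k + j * (k + 1)).factorial : ℚ) ≠ 0 := by positivity
    have h2 : ((j * (k + 1)).factorial : ℚ) ≠ 0 := by positivity
    have h3 : (k.factorial : ℚ) ≠ 0 := by positivity
    have h4 : ((a + (k + j * (k + 1))).factorial : ℚ) ≠ 0 := by positivity
    have h5 : ((b + (k + j * (k + 1))).factorial : ℚ) ≠ 0 := by positivity
    push_cast
    field_simp
    ring
end
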